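/- For every r ∈ (1,2), with ε = (r−1)/4, there is a constant C > 0 such that for every integer y ≥ 1 there is an integer N_{r,y} with: for all b with gcd(b,y) = 1, every finite set F ⊂ ℤ, and every real 0 < λ < 1, setting N₀ = max(N_{r,y}, 2^{λ^{1−r}}), one has #{ x ∈ ℤ : sup_{N = 2^n > N₀} A_{N,y,b} 1_F(x) > λ } ≤ C · λ^{−r−ε} · |F|, where the supremum is over dyadic integers N = 2^n exceeding N₀. -/

import Mathlib

open scoped ENNReal Classical

noncomputable section

/-- The prime-progression average `A_{N,y,b} f`. -/
def pavg (N y : ℕ) (b : ℤ) (f : ℤ → ℝ) (x : ℤ) : ℝ :=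
  (Nat.totient y : ℝ) / (N : ℝ) *
    ∑ n ∈ (Finset.range N).filter (fun n : ℕ => (n : ℤ) % (y : ℤ) = b % (y : ℤ)),
      ArithmeticFunction.vonMangoldt n * f (x - n)

/-! ### The Selberg sieve, indexed by finite sets of primes -/

/-- The Ramanujan sum `c_p` of a prime modulus `p`. -/
def ramPrime (p : ℕ) (n : ℤ) : ℝ := if (p : ℤ) ∣ n then (p : ℝ) - 1 else -1

/-- The Ramanujan sum whose modulus is the product of the primes in `S`. -/
def ram (S : Finset ℕ) (n : ℤ) : ℝ := ∏ p ∈ S, ramPrime p n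

/-- Euler's function of the product of the primes in `S`. -/
def phiS (S : Finset ℕ) : ℝ := ∏ p ∈ S, ((p : ℝ) - 1)

/-- The finite sets of primes not dividing `y` whose product is at most `D`. -/
def adm (y D : ℕ) : Finset (Finset ℕ) :=
  ((Finset.range (D + 1)).filter (fun p => p.Prime ∧ ¬ p ∣ y)).powerset.filter
    (fun S => ∏ p ∈ S, p ≤ D)

/-- The Selberg normalising sum. -/
def selG (y D : ℕ) : ℝ := ∑ S ∈ adm y D, 1 / phiS S

/-- The Selberg sieve polynomial. -/
def selF (y D : ℕ) (n : ℤ) : ℝ := ∑ S ∈ adm y D, (-1) ^ S.card / phiS S * ram S n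

lemma mem_adm {y D : ℕ} {S : Finset ℕ} :
    S ∈ adm y D ↔ (∀ p ∈ S, p.Prime ∧ ¬ p ∣ y) ∧ ∏ p ∈ S, p ≤ D := by
  unfold adm
  simp only [Finset.mem_filter, Finset.mem_powerset, and_congr_left_iff]
  intro hD
  constructor
  · intro h p hp
    exact (Finset.mem_filter.1 (h hp)).2
  · intro h p hp
    refine Finset.mem_filter.2 ⟨?_, h p hp⟩
    have h1 : p ∣ ∏ p ∈ S, p := Finset.dvd_prod_of_mem (fun p => p) hp
    have h2 : 0 < ∏ p ∈ S, p := Finset.prod_pos fun p hp => (h p hp).1.pos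
    have := Nat.le_of_dvd h2 h1
    simp; omega

lemma adm_mono {y D D' : ℕ} (h : D ≤ D') : adm y D ⊆ adm y D' := by
  intro S hS
  rw [mem_adm] at hS ⊢
  exact ⟨hS.1, hS.2.trans h⟩

lemma prod_pos_of_prime {S : Finset ℕ} (hS : ∀ p ∈ S, p.Prime) : 0 < ∏ p ∈ S, p :=
  Finset.prod_pos fun p hp => (hS p hp).pos

lemma phiS_pos {S : Finset ℕ} (hS : ∀ p ∈ S, p.Prime) : 0 < phiS S := by
  refine Finset.prod_pos fun p hp => ?_
  have : (2 : ℝ) ≤ p := by exact_mod_cast (hS p hp).two_le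
  linarith

lemma prod_le_two_pow_mul_phiS {S : Finset ℕ} (hS : ∀ p ∈ S, p.Prime) :
    ((∏ p ∈ S, p : ℕ) : ℝ) ≤ 2 ^ S.card * phiS S := by
  unfold phiS
  push_cast
  rw [← Finset.prod_const, ← Finset.prod_mul_distrib]
  refine Finset.prod_le_prod (fun _ _ => by positivity) fun p hp => ?_
  have : (2 : ℝ) ≤ p := by exact_mod_cast (hS p hp).two_le
  linarith

lemma prod_primes_injOn :
    Set.InjOn (fun S : Finset ℕ => ∏ p ∈ S, p) {S | ∀ p ∈ S, p.Prime} := by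
  intro S hS T hT h
  have h1 := Nat.primeFactors_prod hS
  have h2 := Nat.primeFactors_prod hT
  simp only at h
  rw [← h1, ← h2, h]

lemma abs_ramPrime_le {p : ℕ} (hp : p.Prime) (n : ℤ) : |ramPrime p n| ≤ p := by
  have : (2 : ℝ) ≤ p := by exact_mod_cast hp.two_le
  unfold ramPrime
  split_ifs
  · rw [abs_le]; constructor <;> linarith
  · rw [abs_neg, abs_one]; linarith

lemma abs_ram_le {S : Finset ℕ} (hS : ∀ p ∈ S, p.Prime) (n : ℤ) :
    |ram S n| ≤ ((∏ p ∈ S, p : ℕ) : ℝ) := by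
  unfold ram
  rw [Finset.abs_prod]
  push_cast
  exact Finset.prod_le_prod (fun _ _ => abs_nonneg _) fun p hp => abs_ramPrime_le (hS p hp) n

lemma abs_ram_le_sum {S : Finset ℕ} (hS : ∀ p ∈ S, p.Prime) (n : ℤ) :
    |ram S n| ≤ ∑ T ∈ S.powerset, ((∏ p ∈ T, p : ℕ) : ℝ) *
      (if ((∏ p ∈ T, p : ℕ) : ℤ) ∣ n then 1 else 0) := by
  have h1 : |ram S n| ≤ ∏ p ∈ S, ((p : ℝ) * (if (p : ℤ) ∣ n then 1 else 0) + 1) := by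
    unfold ram
    rw [Finset.abs_prod]
    refine Finset.prod_le_prod (fun _ _ => abs_nonneg _) fun p hp => ?_
    have : (2 : ℝ) ≤ p := by exact_mod_cast (hS p hp).two_le
    unfold ramPrime
    split_ifs
    · rw [abs_le]; constructor <;> linarith
    · simp
  refine h1.trans (le_of_eq ?_)
  rw [Finset.prod_add]
  refine Finset.sum_congr rfl fun T hT => ?_
  rw [Finset.prod_const_one, mul_one, Finset.prod_mul_distrib]
  push_cast
  congr 1
  have hTp : ∀ p ∈ T, p.Prime := fun p hp => hS p (Finset.mem_powerset.1 hT hp)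
  have : ((∏ p ∈ T, (p : ℤ)) ∣ n) ↔ ∀ p ∈ T, (p : ℤ) ∣ n := by
    constructor
    · intro h p hp
      exact (Finset.dvd_prod_of_mem (fun p : ℕ => (p : ℤ)) hp).trans h
    · intro h
      refine Finset.prod_dvd_of_coprime ?_ h
      intro p hp q hq hpq
      exact Nat.isCoprime_iff_coprime.2 ((Nat.coprime_primes (hTp p hp) (hTp q hq)).2 hpq)
  by_cases h : ∀ p ∈ T, (p : ℤ) ∣ n
  · rw [if_pos (this.2 h)]
    exact Finset.prod_eq_one fun p hp => if_pos (h p hp)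
  · rw [if_neg (fun h' => h (this.1 h'))]
    push Not at h
    obtain ⟨p, hp, hpn⟩ := h
    exact Finset.prod_eq_zero hp (if_neg hpn)

lemma selF_eq_selG {y D : ℕ} {n : ℤ} (hn : ∀ p : ℕ, p.Prime → p ≤ D → ¬ (p : ℤ) ∣ n) :
    selF y D n = selG y D := by
  unfold selF selG
  refine Finset.sum_congr rfl fun S hS => ?_
  rw [mem_adm] at hS
  have hp : ∀ p ∈ S, p.Prime := fun p hp => (hS.1 p hp).1
  have : ram S n = (-1) ^ S.card := by
    unfold ram
    rw [← Finset.prod_const]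
    refine Finset.prod_congr rfl fun p hpS => if_neg (hn p (hp p hpS) ?_)
    exact (Nat.le_of_dvd (prod_pos_of_prime hp)
      (Finset.dvd_prod_of_mem (fun p => p) hpS)).trans hS.2
  rw [this, div_mul_eq_mul_div, ← pow_add, ← two_mul, pow_mul]
  norm_num

lemma selG_pos (y : ℕ) {D : ℕ} (hD : 1 ≤ D) : 0 < selG y D := by
  unfold selG
  refine Finset.sum_pos (fun S hS => ?_) ⟨∅, ?_⟩
  · rw [mem_adm] at hS
    have := phiS_pos fun p hp => (hS.1 p hp).1
    positivity
  · rw [mem_adm]; simpa using hD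

lemma ramPrime_sq (p : ℕ) (n : ℤ) :
    ramPrime p n * ramPrime p n = ((p : ℝ) - 2) * ramPrime p n + ((p : ℝ) - 1) := by
  unfold ramPrime
  split_ifs <;> ring

/-- The coefficient of `ram E` times the symmetric difference in the product of two
Ramanujan sums. -/
def prodCoeff (A B E : Finset ℕ) : ℝ :=
  (∏ p ∈ E, ((p : ℝ) - 2)) * ∏ p ∈ (A ∩ B) \ E, ((p : ℝ) - 1)

lemma ram_union {A B : Finset ℕ} (h : Disjoint A B) (n : ℤ) :
    ram (A ∪ B) n = ram A n * ram B n := Finset.prod_union h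

lemma phiS_union {A B : Finset ℕ} (h : Disjoint A B) :
    phiS (A ∪ B) = phiS A * phiS B := Finset.prod_union h

lemma ram_mul_ram (A B : Finset ℕ) (n : ℤ) :
    ram A n * ram B n = ∑ E ∈ (A ∩ B).powerset,
      prodCoeff A B E * ram ((A \ B) ∪ (B \ A) ∪ E) n := by
  have hA : ram A n = ram (A \ B) n * ram (A ∩ B) n := by
    rw [← ram_union (Finset.disjoint_sdiff_inter A B), Finset.sdiff_union_inter]
  have hB : ram B n = ram (B \ A) n * ram (A ∩ B) n := by
    rw [Finset.inter_comm, ← ram_union (Finset.disjoint_sdiff_inter B A),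
      Finset.sdiff_union_inter]
  have h2 : ram (A ∩ B) n * ram (A ∩ B) n = ∑ E ∈ (A ∩ B).powerset,
      prodCoeff A B E * ram E n := by
    unfold ram
    rw [← Finset.prod_mul_distrib, Finset.prod_congr rfl fun p _ => ramPrime_sq p n,
      Finset.prod_add]
    refine Finset.sum_congr rfl fun E _ => ?_
    unfold prodCoeff
    rw [Finset.prod_mul_distrib]
    ring
  calc ram A n * ram B n = ram (A \ B) n * ram (B \ A) n * (ram (A ∩ B) n * ram (A ∩ B) n) := by
        rw [hA, hB]; ring
    _ = _ := by
      rw [h2, Finset.mul_sum]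
      refine Finset.sum_congr rfl fun E hE => ?_
      rw [Finset.mem_powerset] at hE
      rw [ram_union, ram_union]
      · ring
      · exact disjoint_sdiff_sdiff
      · rw [Finset.disjoint_left]
        intro p hp hpE
        have := hE hpE
        simp only [Finset.mem_union, Finset.mem_sdiff, Finset.mem_inter] at hp this
        tauto

/-- The index set of the expansion of `selF ^ 2`. -/
def selTriples (y D : ℕ) : Finset (Finset ℕ × Finset ℕ × Finset ℕ) :=
  ((adm y D) ×ˢ (adm y D) ×ˢ (adm y D).biUnion Finset.powerset).filter
    (fun t => t.2.2 ⊆ t.1 ∩ t.2.1)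

/-- The coefficient attached to a triple in the expansion of `selF ^ 2`. -/
def tripleCoeff (t : Finset ℕ × Finset ℕ × Finset ℕ) : ℝ :=
  (-1) ^ t.1.card / phiS t.1 * ((-1) ^ t.2.1.card / phiS t.2.1) * prodCoeff t.1 t.2.1 t.2.2

/-- The frequency set attached to a triple in the expansion of `selF ^ 2`. -/
def tripleSet (t : Finset ℕ × Finset ℕ × Finset ℕ) : Finset ℕ :=
  (t.1 \ t.2.1) ∪ (t.2.1 \ t.1) ∪ t.2.2

/-- The coefficient of `ram Q` in `selF ^ 2`. -/
def selCoeff (y D : ℕ) (Q : Finset ℕ) : ℝ :=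
  ∑ t ∈ (selTriples y D).filter (fun t => tripleSet t = Q), tripleCoeff t

lemma mem_selTriples {y D : ℕ} {t : Finset ℕ × Finset ℕ × Finset ℕ} :
    t ∈ selTriples y D ↔ t.1 ∈ adm y D ∧ t.2.1 ∈ adm y D ∧ t.2.2 ⊆ t.1 ∩ t.2.1 := by
  unfold selTriples
  simp only [Finset.mem_filter, Finset.mem_product, Finset.mem_biUnion, Finset.mem_powerset]
  constructor
  · tauto
  · rintro ⟨h1, h2, h3⟩
    exact ⟨⟨h1, h2, t.1, h1, h3.trans Finset.inter_subset_left⟩, h3⟩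

lemma tripleSet_mem {y D : ℕ} {t : Finset ℕ × Finset ℕ × Finset ℕ} (ht : t ∈ selTriples y D) :
    tripleSet t ∈ adm y (D * D) := by
  obtain ⟨h1, h2, h3⟩ := mem_selTriples.1 ht
  rw [mem_adm] at h1 h2 ⊢
  have hsub : tripleSet t ⊆ t.1 ∪ t.2.1 := by
    intro p hp
    unfold tripleSet at hp
    have := @h3 p
    simp only [Finset.mem_union, Finset.mem_sdiff, Finset.mem_inter] at *
    tauto
  have hpr : ∀ p ∈ t.1 ∪ t.2.1, p.Prime ∧ ¬ p ∣ y := by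
    intro p hp
    rcases Finset.mem_union.1 hp with h | h
    exacts [h1.1 p h, h2.1 p h]
  refine ⟨fun p hp => hpr p (hsub hp), ?_⟩
  calc ∏ p ∈ tripleSet t, p ≤ ∏ p ∈ t.1 ∪ t.2.1, p :=
        Finset.prod_le_prod_of_subset_of_one_le' hsub fun p hp _ => (hpr p hp).1.one_le
    _ ≤ (∏ p ∈ t.1, p) * ∏ p ∈ t.2.1, p := by
        rw [← Finset.prod_union_inter]
        refine Nat.le_mul_of_pos_right _ (prod_pos_of_prime fun p hp => ?_)
        exact (h1.1 p (Finset.mem_inter.1 hp).1).1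
    _ ≤ D * D := Nat.mul_le_mul h1.2 h2.2

lemma selF_sq (y D : ℕ) (n : ℤ) :
    selF y D n ^ 2 = ∑ Q ∈ adm y (D * D), selCoeff y D Q * ram Q n := by
  have h1 : selF y D n ^ 2 = ∑ t ∈ selTriples y D, tripleCoeff t * ram (tripleSet t) n := by
    unfold selTriples
    rw [Finset.sum_filter, Finset.sum_product, sq]
    unfold selF
    rw [Finset.sum_mul_sum]
    refine Finset.sum_congr rfl fun A hA => ?_
    rw [Finset.sum_product]
    refine Finset.sum_congr rfl fun B hB => ?_
    rw [← Finset.sum_filter]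
    have : ((adm y D).biUnion Finset.powerset).filter (fun E => E ⊆ A ∩ B)
        = (A ∩ B).powerset := by
      ext E
      simp only [Finset.mem_filter, Finset.mem_biUnion, Finset.mem_powerset]
      constructor
      · tauto
      · intro h
        exact ⟨⟨A, hA, h.trans Finset.inter_subset_left⟩, h⟩
    simp only [this]
    have h := ram_mul_ram A B n
    calc _ = (-1) ^ A.card / phiS A * ((-1) ^ B.card / phiS B) * (ram A n * ram B n) := by ring
      _ = _ := by
        rw [h, Finset.mul_sum]
        refine Finset.sum_congr rfl fun E _ => ?_
        unfold tripleCoeff tripleSet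
        ring
  rw [h1, ← Finset.sum_fiberwise_of_maps_to (fun t ht => tripleSet_mem ht)]
  refine Finset.sum_congr rfl fun Q _ => ?_
  unfold selCoeff
  rw [Finset.sum_mul]
  refine Finset.sum_congr rfl fun t ht => ?_
  rw [(Finset.mem_filter.1 ht).2]

lemma abs_tripleCoeff_le {y D : ℕ} {t : Finset ℕ × Finset ℕ × Finset ℕ}
    (ht : t ∈ selTriples y D) :
    |tripleCoeff t| ≤ 1 / phiS (tripleSet t) * (1 / phiS ((t.1 ∩ t.2.1) \ t.2.2)) := by
  obtain ⟨h1, h2, h3⟩ := mem_selTriples.1 ht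
  obtain ⟨A, B, E⟩ := t
  simp only at h1 h2 h3 ⊢
  rw [mem_adm] at h1 h2
  have hA : ∀ p ∈ A, p.Prime := fun p hp => (h1.1 p hp).1
  have hB : ∀ p ∈ B, p.Prime := fun p hp => (h2.1 p hp).1
  have hAB : ∀ p ∈ A ∩ B, p.Prime := fun p hp => hA p (Finset.mem_inter.1 hp).1
  have pE : 0 < phiS E := phiS_pos fun p hp => hAB p (h3 hp)
  have pg : 0 < phiS ((A ∩ B) \ E) := phiS_pos fun p hp => hAB p (Finset.mem_sdiff.1 hp).1
  have pH1 : 0 < phiS (A \ B) := phiS_pos fun p hp => hA p (Finset.mem_sdiff.1 hp).1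
  have pH2 : 0 < phiS (B \ A) := phiS_pos fun p hp => hB p (Finset.mem_sdiff.1 hp).1
  have eAB : phiS (A ∩ B) = phiS ((A ∩ B) \ E) * phiS E := by
    rw [← phiS_union Finset.sdiff_disjoint, Finset.sdiff_union_of_subset h3]
  have eA : phiS A = phiS (A \ B) * phiS (A ∩ B) := by
    rw [← phiS_union (Finset.disjoint_sdiff_inter A B), Finset.sdiff_union_inter]
  have eB : phiS B = phiS (B \ A) * phiS (A ∩ B) := by
    rw [Finset.inter_comm, ← phiS_union (Finset.disjoint_sdiff_inter B A),
      Finset.sdiff_union_inter]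
  have eQ : phiS (tripleSet (A, B, E)) = phiS (A \ B) * phiS (B \ A) * phiS E := by
    unfold tripleSet
    rw [phiS_union, phiS_union]
    · exact disjoint_sdiff_sdiff
    · rw [Finset.disjoint_left]
      intro p hp hpE
      have := h3 hpE
      simp only [Finset.mem_union, Finset.mem_sdiff, Finset.mem_inter] at hp this
      tauto
  have hps : |∏ p ∈ E, ((p : ℝ) - 2)| ≤ phiS E := by
    rw [Finset.abs_prod]
    refine Finset.prod_le_prod (fun _ _ => abs_nonneg _) fun p hp => ?_
    have : (2 : ℝ) ≤ p := by exact_mod_cast (hAB p (h3 hp)).two_le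
    rw [abs_of_nonneg (by linarith)]
    linarith
  have hpc : |prodCoeff A B E| ≤ phiS E * phiS ((A ∩ B) \ E) := by
    unfold prodCoeff
    rw [abs_mul]
    have : |∏ p ∈ (A ∩ B) \ E, ((p : ℝ) - 1)| = phiS ((A ∩ B) \ E) := abs_of_pos pg
    rw [this]
    exact mul_le_mul_of_nonneg_right hps pg.le
  unfold tripleCoeff
  rw [abs_mul, abs_mul, abs_div, abs_div, abs_pow, abs_pow, abs_neg, abs_one, one_pow, one_pow,
    abs_of_pos (phiS_pos hA), abs_of_pos (phiS_pos hB), eQ, eA, eB, eAB]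
  calc _ ≤ 1 / (phiS (A \ B) * (phiS ((A ∩ B) \ E) * phiS E)) *
        (1 / (phiS (B \ A) * (phiS ((A ∩ B) \ E) * phiS E))) *
          (phiS E * phiS ((A ∩ B) \ E)) := by
        refine mul_le_mul_of_nonneg_left hpc (by positivity)
    _ = _ := by field_simp

lemma tripleSet_reconstruct {A B E Q : Finset ℕ} (hE : E ⊆ A ∩ B) (hQ : tripleSet (A, B, E) = Q) :
    E = Q \ ((A \ B) ∪ (B \ A)) ∧ A = (A \ B) ∪ ((A ∩ B) \ E) ∪ E ∧
      B = (B \ A) ∪ ((A ∩ B) \ E) ∪ E := by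
  subst hQ
  refine ⟨?_, ?_, ?_⟩ <;>
  · ext p
    have := @hE p
    simp only [tripleSet, Finset.mem_union, Finset.mem_sdiff, Finset.mem_inter] at this ⊢
    by_cases p ∈ A <;> by_cases p ∈ B <;> by_cases p ∈ E <;> simp_all

lemma abs_selCoeff_le (y D : ℕ) (Q : Finset ℕ) (hQ : ∀ p ∈ Q, p.Prime) :
    |selCoeff y D Q| ≤ 4 ^ Q.card / phiS Q * selG y D := by
  have hφ := phiS_pos hQ
  set T := (selTriples y D).filter (fun t => tripleSet t = Q) with hT
  set ι : Finset ℕ × Finset ℕ × Finset ℕ → Finset ℕ × Finset ℕ × Finset ℕ :=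
    fun t => (t.1 \ t.2.1, t.2.1 \ t.1, (t.1 ∩ t.2.1) \ t.2.2) with hι
  have hmaps : ∀ t ∈ T, ι t ∈ Q.powerset ×ˢ Q.powerset ×ˢ adm y D := by
    intro t ht
    obtain ⟨ht1, rfl⟩ := Finset.mem_filter.1 ht
    obtain ⟨h1, h2, h3⟩ := mem_selTriples.1 ht1
    rw [mem_adm] at h1
    simp only [hι, Finset.mem_product, Finset.mem_powerset]
    refine ⟨?_, ?_, ?_⟩
    · intro p hp; unfold tripleSet; simp only [Finset.mem_union]; tauto
    · intro p hp; unfold tripleSet; simp only [Finset.mem_union]; tauto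
    · have hsub : (t.1 ∩ t.2.1) \ t.2.2 ⊆ t.1 :=
        Finset.sdiff_subset.trans Finset.inter_subset_left
      rw [mem_adm]
      refine ⟨fun p hp => h1.1 p (hsub hp), le_trans ?_ h1.2⟩
      exact Finset.prod_le_prod_of_subset_of_one_le' hsub fun p hp _ => (h1.1 p hp).1.one_le
  have hinj : Set.InjOn ι T := by
    intro t ht t' ht' h
    obtain ⟨ht1, e1⟩ := Finset.mem_filter.1 ht
    obtain ⟨ht1', e2⟩ := Finset.mem_filter.1 ht'
    obtain ⟨-, -, h3⟩ := mem_selTriples.1 ht1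
    obtain ⟨-, -, h3'⟩ := mem_selTriples.1 ht1'
    obtain ⟨A, B, E⟩ := t
    obtain ⟨A', B', E'⟩ := t'
    obtain ⟨k1, k2, k3⟩ := tripleSet_reconstruct (A := A) (B := B) (E := E) h3 e1
    obtain ⟨k1', k2', k3'⟩ := tripleSet_reconstruct (A := A') (B := B') (E := E') h3' e2
    simp only [hι, Prod.mk.injEq] at h
    obtain ⟨g1, g2, g3⟩ := h
    have eE : E = E' := by rw [k1, k1', g1, g2]
    have eA : A = A' := by rw [k2, k2', g1, g3, eE]
    have eB : B = B' := by rw [k3, k3', g2, g3, eE]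
    rw [eA, eB, eE]
  calc |selCoeff y D Q| ≤ ∑ t ∈ T, |tripleCoeff t| := Finset.abs_sum_le_sum_abs _ _
    _ ≤ ∑ t ∈ T, 1 / phiS Q * (1 / phiS (ι t).2.2) := by
        refine Finset.sum_le_sum fun t ht => ?_
        obtain ⟨ht1, e1⟩ := Finset.mem_filter.1 ht
        have := abs_tripleCoeff_le ht1
        rwa [e1] at this
    _ = ∑ t ∈ T.image ι, 1 / phiS Q * (1 / phiS t.2.2) := by
        rw [Finset.sum_image hinj]
    _ ≤ ∑ t ∈ Q.powerset ×ˢ Q.powerset ×ˢ adm y D, 1 / phiS Q * (1 / phiS t.2.2) := by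
        refine Finset.sum_le_sum_of_subset_of_nonneg ?_ ?_
        · intro s hs
          obtain ⟨t, ht, rfl⟩ := Finset.mem_image.1 hs
          exact hmaps t ht
        · intro t ht _
          simp only [Finset.mem_product] at ht
          have := phiS_pos fun p hp => ((mem_adm.1 ht.2.2).1 p hp).1
          positivity
    _ = _ := by
        rw [Finset.sum_product]
        simp only [Finset.sum_product, Finset.sum_const, Finset.card_powerset, ← Finset.mul_sum]
        unfold selG
        rw [show (4 : ℝ) = 2 * 2 by norm_num, mul_pow]
        simp only [nsmul_eq_mul]
        push_cast
        ring

lemma sum_inv_sq_le (D : ℕ) : ∑ m ∈ Finset.Icc 1 D, (1 : ℝ) / (m : ℝ) ^ 2 ≤ 2 := by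
  rcases Nat.eq_zero_or_pos D with rfl | hD
  · simp
  have h := sum_Ioc_inv_sq_le_sub (α := ℝ) one_ne_zero hD
  rw [← Finset.add_sum_Ioc_eq_sum_Icc hD]
  have : (0 : ℝ) ≤ (D : ℝ)⁻¹ := by positivity
  simp only [one_div, Nat.cast_one, inv_one, one_pow] at h ⊢
  linarith

lemma log_le_selG_one (D : ℕ) (hD : 1 ≤ D) : Real.log D / 2 ≤ selG 1 D := by
  have h1 : Real.log D ≤ ∑ n ∈ Finset.Icc 1 D, (1 : ℝ) / n := by
    have := log_add_one_le_harmonic D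
    rw [harmonic_eq_sum_Icc] at this
    push_cast at this
    simp only [one_div]
    refine le_trans (Real.log_le_log (by exact_mod_cast hD) ?_) this
    linarith
  have hex : ∀ n : ℕ, ∃ a b : ℕ, b ^ 2 * a = n ∧ Squarefree a := Nat.sq_mul_squarefree
  choose a b hab hsq using hex
  set ι : ℕ → Finset ℕ × ℕ := fun n => ((a n).primeFactors, b n) with hι
  have hrec : ∀ n, (ι n).2 ^ 2 * ∏ p ∈ (ι n).1, p = n := by
    intro n
    simp only [hι, Nat.prod_primeFactors_of_squarefree (hsq n)]
    exact hab n
  have hinj : Set.InjOn ι (Finset.Icc 1 D) := by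
    intro n _ m _ h
    rw [← hrec n, ← hrec m, h]
  have hprime : ∀ S ∈ adm 1 D, ∀ p ∈ S, p.Prime := fun S hS p hp => ((mem_adm.1 hS).1 p hp).1
  have h2 : ∑ n ∈ Finset.Icc 1 D, (1 : ℝ) / n ≤
      ∑ t ∈ adm 1 D ×ˢ Finset.Icc 1 D, 1 / phiS t.1 * (1 / (t.2 : ℝ) ^ 2) := by
    calc ∑ n ∈ Finset.Icc 1 D, (1 : ℝ) / n
        = ∑ n ∈ Finset.Icc 1 D, 1 / ((∏ p ∈ (ι n).1, p : ℕ) : ℝ) * (1 / ((ι n).2 : ℝ) ^ 2) := by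
          refine Finset.sum_congr rfl fun n _ => ?_
          conv_lhs => rw [← hrec n]
          push_cast
          rw [one_div_mul_one_div, mul_comm]
      _ = ∑ t ∈ (Finset.Icc 1 D).image ι,
            1 / ((∏ p ∈ t.1, p : ℕ) : ℝ) * (1 / (t.2 : ℝ) ^ 2) := by
          rw [Finset.sum_image hinj]
      _ ≤ ∑ t ∈ adm 1 D ×ˢ Finset.Icc 1 D,
            1 / ((∏ p ∈ t.1, p : ℕ) : ℝ) * (1 / (t.2 : ℝ) ^ 2) := by
          refine Finset.sum_le_sum_of_subset_of_nonneg ?_ fun _ _ _ => by positivity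
          intro t ht
          obtain ⟨n, hn, rfl⟩ := Finset.mem_image.1 ht
          rw [Finset.mem_Icc] at hn
          have hr := hrec n
          have hb : 0 < (ι n).2 := by
            rcases Nat.eq_zero_or_pos (ι n).2 with h | h
            · rw [h] at hr; simp at hr; omega
            · exact h
          have hS : ∀ p ∈ (ι n).1, p.Prime := fun p hp => Nat.prime_of_mem_primeFactors hp
          have hq := prod_pos_of_prime hS
          rw [Finset.mem_product, mem_adm, Finset.mem_Icc]
          refine ⟨⟨fun p hp => ⟨hS p hp, (hS p hp).not_dvd_one⟩, ?_⟩, hb, ?_⟩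
          · refine le_trans ?_ hn.2
            conv_rhs => rw [← hr]
            exact Nat.le_mul_of_pos_left _ (by positivity)
          · refine le_trans ?_ hn.2
            conv_rhs => rw [← hr]
            calc (ι n).2 ≤ (ι n).2 ^ 2 := Nat.le_self_pow two_ne_zero _
              _ ≤ _ := Nat.le_mul_of_pos_right _ hq
      _ ≤ _ := by
          refine Finset.sum_le_sum fun t ht => ?_
          have hS := hprime t.1 (Finset.mem_product.1 ht).1
          refine mul_le_mul_of_nonneg_right ?_ (by positivity)
          refine one_div_le_one_div_of_le (phiS_pos hS) ?_
          unfold phiS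
          push_cast
          refine Finset.prod_le_prod (fun p hp => ?_) fun p _ => by linarith
          have : (2 : ℝ) ≤ p := by exact_mod_cast (hS p hp).two_le
          linarith
  rw [Finset.sum_product] at h2
  simp only [← Finset.mul_sum] at h2
  rw [← Finset.sum_mul] at h2
  have h3 := sum_inv_sq_le D
  have h4 := selG_pos 1 hD
  unfold selG at h4 ⊢
  have := mul_le_mul_of_nonneg_left h3 h4.le
  linarith

lemma totient_div_le_selG (y D : ℕ) (hy : 1 ≤ y) (hD : 1 ≤ D) :
    (Nat.totient y : ℝ) / y * (Real.log D / 2) ≤ selG y D := by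
  have hG := selG_pos y hD
  set P := y.primeFactors with hP
  have hPp : ∀ p ∈ P, p.Prime := fun p hp => Nat.prime_of_mem_primeFactors hp
  have h1 : selG 1 D ≤ (∑ T ∈ P.powerset, 1 / phiS T) * selG y D := by
    unfold selG
    rw [Finset.sum_mul_sum, ← Finset.sum_product']
    set ι : Finset ℕ → Finset ℕ × Finset ℕ := fun S => (S ∩ P, S \ P) with hι
    have hinj : Set.InjOn ι (adm 1 D) := by
      intro S _ T _ h
      simp only [hι, Prod.mk.injEq] at h
      rw [← Finset.sdiff_union_inter S P, ← Finset.sdiff_union_inter T P, h.1, h.2]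
    calc ∑ S ∈ adm 1 D, 1 / phiS S = ∑ S ∈ adm 1 D, 1 / phiS (ι S).1 * (1 / phiS (ι S).2) := by
          refine Finset.sum_congr rfl fun S _ => ?_
          simp only [hι]
          rw [one_div_mul_one_div, mul_comm, ← phiS_union (Finset.disjoint_sdiff_inter S P),
            Finset.sdiff_union_inter]
      _ = ∑ t ∈ (adm 1 D).image ι, 1 / phiS t.1 * (1 / phiS t.2) := by
          rw [Finset.sum_image hinj]
      _ ≤ _ := by
          refine Finset.sum_le_sum_of_subset_of_nonneg ?_ ?_
          · intro t ht
            obtain ⟨S, hS, rfl⟩ := Finset.mem_image.1 ht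
            rw [mem_adm] at hS
            rw [Finset.mem_product, Finset.mem_powerset, mem_adm]
            refine ⟨Finset.inter_subset_right, fun p hp => ?_, le_trans ?_ hS.2⟩
            · obtain ⟨h1, h2⟩ := Finset.mem_sdiff.1 hp
              refine ⟨(hS.1 p h1).1, fun h => h2 ?_⟩
              exact Nat.mem_primeFactors.2 ⟨(hS.1 p h1).1, h, by omega⟩
            · exact Finset.prod_le_prod_of_subset_of_one_le' Finset.sdiff_subset
                fun p hp _ => (hS.1 p hp).1.one_le
          · intro t ht _
            rw [Finset.mem_product, Finset.mem_powerset, mem_adm] at ht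
            have e1 := phiS_pos fun p hp => hPp p (ht.1 hp)
            have e2 := phiS_pos fun p hp => (ht.2.1 p hp).1
            positivity
  have h2 : (Nat.totient y : ℝ) / y * (∑ T ∈ P.powerset, 1 / phiS T) = 1 := by
    have e1 : (Nat.totient y : ℝ) / y = ∏ p ∈ P, (1 - (p : ℝ)⁻¹) := by
      have := Nat.totient_eq_mul_prod_factors y
      have h' : ((Nat.totient y : ℚ) : ℝ) = ((y * ∏ p ∈ P, (1 - (p : ℚ)⁻¹) : ℚ) : ℝ) := by
        rw [this]
      push_cast at h'
      rw [h']
      have : (y : ℝ) ≠ 0 := by positivity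
      field_simp
    have e2 : ∑ T ∈ P.powerset, 1 / phiS T = ∏ p ∈ P, (1 / ((p : ℝ) - 1) + 1) := by
      rw [Finset.prod_add_one]
      refine Finset.sum_congr rfl fun T _ => ?_
      unfold phiS
      rw [Finset.prod_div_distrib, Finset.prod_const_one]
    rw [e1, e2, ← Finset.prod_mul_distrib]
    refine Finset.prod_eq_one fun p hp => ?_
    have : (2 : ℝ) ≤ p := by exact_mod_cast (hPp p hp).two_le
    have e3 : (p : ℝ) - 1 ≠ 0 := by linarith
    field_simp
    ring
  calc _ ≤ (Nat.totient y : ℝ) / y * ((∑ T ∈ P.powerset, 1 / phiS T) * selG y D) := by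
        refine mul_le_mul_of_nonneg_left ((log_le_selG_one D hD).trans h1) (by positivity)
    _ = _ := by rw [← mul_assoc, h2, one_mul]

lemma exists_pow_card_le (K ε : ℝ) (hK : 1 ≤ K) (hε : 0 < ε) :
    ∃ C : ℝ, 1 ≤ C ∧ ∀ S : Finset ℕ, (∀ p ∈ S, p.Prime) →
      K ^ S.card ≤ C * ((∏ p ∈ S, p : ℕ) : ℝ) ^ ε := by
  have h := ((tendsto_rpow_atTop hε).comp
    (tendsto_natCast_atTop_atTop (R := ℝ))).eventually_ge_atTop K
  obtain ⟨P, hP⟩ := Filter.eventually_atTop.1 h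
  refine ⟨K ^ P, one_le_pow₀ hK, fun S hS => ?_⟩
  calc K ^ S.card = ∏ p ∈ S, K := by simp
    _ ≤ ∏ p ∈ S, ((if p < P then K else 1) * (p : ℝ) ^ ε) := by
      refine Finset.prod_le_prod (fun _ _ => by linarith) fun p hp => ?_
      split_ifs with h
      · have : (1 : ℝ) ≤ p := by exact_mod_cast (hS p hp).one_le
        exact le_mul_of_one_le_right (by linarith) (Real.one_le_rpow this hε.le)
      · rw [one_mul]; exact hP p (by omega)
    _ = K ^ (S.filter (fun p => p < P)).card * ((∏ p ∈ S, p : ℕ) : ℝ) ^ ε := by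
      rw [Finset.prod_mul_distrib]
      push_cast
      rw [Real.finsetProd_rpow _ _ fun _ _ => by positivity, ← Finset.prod_filter]
      simp
    _ ≤ _ := by
      refine mul_le_mul_of_nonneg_right (pow_le_pow_right₀ hK ?_) (by positivity)
      calc _ ≤ (Finset.range P).card := Finset.card_le_card fun p hp => by
            simpa using (Finset.mem_filter.1 hp).2
        _ = P := Finset.card_range P

/-! ### Complete and incomplete sums of Ramanujan sums -/

lemma sum_range_mul_periodic {f g : ℕ → ℝ} {p r : ℕ} (hf : Function.Periodic f p)
    (hg : Function.Periodic g r) (h : Nat.Coprime p r) (hp : 0 < p) (hr : 0 < r) :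
    ∑ m ∈ Finset.range (p * r), f m * g m =
      (∑ m ∈ Finset.range p, f m) * ∑ m ∈ Finset.range r, g m := by
  rw [Finset.sum_mul_sum, ← Finset.sum_product']
  refine Finset.sum_nbij (fun m => (m % p, m % r)) ?_ ?_ ?_ ?_
  · intro m _
    simp [Nat.mod_lt _ hp, Nat.mod_lt _ hr]
  · intro m hm n hn hmn
    simp only [Prod.mk.injEq] at hmn
    have h1 : m ≡ n [MOD p * r] := (Nat.modEq_and_modEq_iff_modEq_mul h).1 ⟨hmn.1, hmn.2⟩
    simp only [Finset.coe_range, Set.mem_Iio] at hm hn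
    exact Nat.ModEq.eq_of_lt_of_lt h1 hm hn
  · rintro ⟨a, b⟩ hab
    simp only [Finset.coe_product, Finset.coe_range, Set.mem_prod, Set.mem_Iio] at hab
    refine ⟨Nat.chineseRemainder h a b, ?_, ?_⟩
    · simpa using Nat.chineseRemainder_lt_mul h a b hp.ne' hr.ne'
    · have := (Nat.chineseRemainder h a b).2
      simp only [Nat.ModEq, Nat.mod_eq_of_lt hab.1, Nat.mod_eq_of_lt hab.2] at this
      simp [this.1, this.2]
  · intro m _
    simp only [hf.map_mod_nat, hg.map_mod_nat]

lemma periodic_prod {S : Finset ℕ} {h : ℕ → ℕ → ℝ} (hh : ∀ p ∈ S, Function.Periodic (h p) p) :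
    Function.Periodic (fun m => ∏ p ∈ S, h p m) (∏ p ∈ S, p) := by
  intro m
  refine Finset.prod_congr rfl fun p hp => ?_
  obtain ⟨c, hc⟩ := Finset.dvd_prod_of_mem (fun p : ℕ => p) hp
  rw [hc, mul_comm]
  exact (hh p hp).nat_mul c m

lemma sum_range_prod_periodic {S : Finset ℕ} {h : ℕ → ℕ → ℝ} (hS : ∀ p ∈ S, p.Prime)
    (hh : ∀ p ∈ S, Function.Periodic (h p) p) :
    ∑ m ∈ Finset.range (∏ p ∈ S, p), ∏ p ∈ S, h p m =
      ∏ p ∈ S, ∑ m ∈ Finset.range p, h p m := by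
  induction S using Finset.induction_on with
  | empty => simp
  | insert a S ha ih =>
    have hS' : ∀ p ∈ S, p.Prime := fun p hp => hS p (Finset.mem_insert_of_mem hp)
    have hh' : ∀ p ∈ S, Function.Periodic (h p) p := fun p hp => hh p (Finset.mem_insert_of_mem hp)
    have haP := hS a (Finset.mem_insert_self a S)
    simp only [Finset.prod_insert ha]
    rw [sum_range_mul_periodic (hh a (Finset.mem_insert_self a S)) (periodic_prod hh') ?_
      haP.pos (prod_pos_of_prime hS'), ih hS' hh']
    refine Nat.Coprime.prod_right fun q hq => ?_
    refine (Nat.coprime_primes haP (hS' q hq)).2 ?_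
    rintro rfl
    exact ha hq

lemma sum_range_dvd_linear {p : ℕ} (hp : p.Prime) {c : ℤ} (hc : ¬ (p : ℤ) ∣ c) (a : ℤ) :
    ∑ m ∈ Finset.range p, (if (p : ℤ) ∣ c * m + a then (1 : ℝ) else 0) = 1 := by
  have : Fact p.Prime := ⟨hp⟩
  have hc' : (c : ZMod p) ≠ 0 := fun h => hc ((ZMod.intCast_zmod_eq_zero_iff_dvd c p).1 h)
  set m₀ : ℕ := (-(a : ZMod p) / c).val with hm₀
  rw [Finset.sum_eq_single_of_mem m₀]
  · rw [if_pos]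
    rw [← ZMod.intCast_zmod_eq_zero_iff_dvd]
    push_cast
    rw [hm₀, ZMod.natCast_zmod_val]
    field_simp
    ring
  · simpa using ZMod.val_lt _
  · intro m hm hne
    rw [if_neg]
    rw [← ZMod.intCast_zmod_eq_zero_iff_dvd]
    push_cast
    intro h
    apply hne
    have : (m : ZMod p) = -(a : ZMod p) / c := by
      field_simp
      linear_combination h
    rw [hm₀, ← this, ZMod.val_natCast, Nat.mod_eq_of_lt (by simpa using hm)]

lemma ramPrime_eq (p : ℕ) (n : ℤ) :
    ramPrime p n = p * (if (p : ℤ) ∣ n then 1 else 0) - 1 := by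
  unfold ramPrime
  split_ifs <;> ring

lemma ramPrime_periodic (p : ℕ) (c a : ℤ) :
    Function.Periodic (fun m : ℕ => ramPrime p (c * m + a)) p := by
  intro m
  simp only [ramPrime]
  have : (p : ℤ) ∣ c * ((m + p : ℕ) : ℤ) + a ↔ (p : ℤ) ∣ c * m + a := by
    rw [show c * ((m + p : ℕ) : ℤ) + a = c * m + a + p * c by push_cast; ring]
    exact Int.dvd_add_left (Dvd.intro _ rfl)
  simp only [this]

lemma sum_ramPrime {p : ℕ} (hp : p.Prime) {c : ℤ} (hc : ¬ (p : ℤ) ∣ c) (a : ℤ) :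
    ∑ m ∈ Finset.range p, ramPrime p (c * m + a) = 0 := by
  simp only [ramPrime_eq]
  rw [Finset.sum_sub_distrib, ← Finset.mul_sum, sum_range_dvd_linear hp hc]
  simp

lemma sum_abs_ramPrime {p : ℕ} (hp : p.Prime) {c : ℤ} (hc : ¬ (p : ℤ) ∣ c) (a : ℤ) :
    ∑ m ∈ Finset.range p, |ramPrime p (c * m + a)| ≤ 2 * p := by
  have h2 : (2 : ℝ) ≤ p := by exact_mod_cast hp.two_le
  calc ∑ m ∈ Finset.range p, |ramPrime p (c * m + a)|
      ≤ ∑ m ∈ Finset.range p, ((p : ℝ) * (if (p : ℤ) ∣ c * m + a then 1 else 0) + 1) := by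
        refine Finset.sum_le_sum fun m _ => ?_
        unfold ramPrime
        split_ifs
        · rw [abs_of_nonneg (by linarith)]; linarith
        · simp
    _ = 2 * p := by
      rw [Finset.sum_add_distrib, ← Finset.mul_sum, sum_range_dvd_linear hp hc]
      simp; ring

lemma sum_ramPrime_conv {p : ℕ} (hp : p.Prime) {c : ℤ} (hc : ¬ (p : ℤ) ∣ c) (k : ℤ) :
    ∑ m ∈ Finset.range p, ramPrime p (c * m + 0) * ramPrime p (-c * m + k) =
      p * ramPrime p k := by
  have hc' : ¬ (p : ℤ) ∣ -c := by rwa [dvd_neg]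
  have hprod : ∀ m : ℕ, (if (p : ℤ) ∣ c * m + 0 then (1 : ℝ) else 0) *
      (if (p : ℤ) ∣ -c * m + k then 1 else 0) =
      (if (p : ℤ) ∣ k then 1 else 0) * (if (p : ℤ) ∣ c * m + 0 then 1 else 0) := by
    intro m
    by_cases h : (p : ℤ) ∣ c * m + 0
    · have : (p : ℤ) ∣ -c * m + k ↔ (p : ℤ) ∣ k := by
        rw [Int.dvd_add_right]
        rw [neg_mul, dvd_neg]; simpa using h
      simp only [if_pos h, this]; ring
    · simp only [if_neg h]; ring
  have : ∀ m : ℕ, ramPrime p (c * m + 0) * ramPrime p (-c * m + k) =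
      (p : ℝ) ^ 2 * ((if (p : ℤ) ∣ k then 1 else 0) * (if (p : ℤ) ∣ c * m + 0 then 1 else 0))
      - p * (if (p : ℤ) ∣ c * m + 0 then 1 else 0)
      - p * (if (p : ℤ) ∣ -c * m + k then 1 else 0) + 1 := by
    intro m
    rw [← hprod, ramPrime_eq, ramPrime_eq]
    ring
  simp only [this]
  rw [Finset.sum_add_distrib, Finset.sum_sub_distrib, Finset.sum_sub_distrib, ← Finset.mul_sum,
    ← Finset.mul_sum, ← Finset.mul_sum, ← Finset.mul_sum, sum_range_dvd_linear hp hc,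
    sum_range_dvd_linear hp hc', ramPrime_eq]
  simp only [Finset.sum_const, Finset.card_range, nsmul_eq_mul]
  ring

lemma sum_ram_conv {y : ℕ} {S : Finset ℕ} (hS : ∀ p ∈ S, p.Prime ∧ ¬ p ∣ y) (k : ℤ) :
    ∑ m ∈ Finset.range (∏ p ∈ S, p), ram S (y * m) * ram S (k - y * m) =
      ((∏ p ∈ S, p : ℕ) : ℝ) * ram S k := by
  have h1 := sum_range_prod_periodic (S := S)
    (h := fun p m => ramPrime p ((y : ℤ) * m + 0) * ramPrime p (-(y : ℤ) * m + k))
    (fun p hp => (hS p hp).1)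
    (fun p _ => (ramPrime_periodic p _ _).mul (ramPrime_periodic p _ _))
  have h2 : ∏ p ∈ S, ∑ m ∈ Finset.range p,
      ramPrime p ((y : ℤ) * m + 0) * ramPrime p (-(y : ℤ) * m + k) =
      ∏ p ∈ S, ((p : ℝ) * ramPrime p k) :=
    Finset.prod_congr rfl fun p hp => sum_ramPrime_conv (hS p hp).1
      (fun h => (hS p hp).2 (by exact_mod_cast h)) k
  rw [h2, Finset.prod_mul_distrib] at h1
  push_cast
  unfold ram
  rw [← h1]
  refine Finset.sum_congr rfl fun m _ => ?_
  rw [← Finset.prod_mul_distrib]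
  refine Finset.prod_congr rfl fun p _ => ?_
  rw [add_zero, neg_mul, neg_add_eq_sub]

lemma sum_abs_ram_le {y : ℕ} {S : Finset ℕ} (hS : ∀ p ∈ S, p.Prime ∧ ¬ p ∣ y) :
    ∑ m ∈ Finset.range (∏ p ∈ S, p), |ram S (y * m)| ≤
      2 ^ S.card * ((∏ p ∈ S, p : ℕ) : ℝ) := by
  have h1 := sum_range_prod_periodic (S := S)
    (h := fun p m => |ramPrime p ((y : ℤ) * m + 0)|)
    (fun p hp => (hS p hp).1)
    (fun p _ m => congrArg abs (ramPrime_periodic p _ _ m))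
  push_cast
  rw [← Finset.prod_const, ← Finset.prod_mul_distrib]
  calc _ = ∑ m ∈ Finset.range (∏ p ∈ S, p), ∏ p ∈ S, |ramPrime p ((y : ℤ) * m + 0)| := by
        simp only [ram, Finset.abs_prod, add_zero]
    _ ≤ _ := by
      rw [h1]
      exact Finset.prod_le_prod (fun _ _ => Finset.sum_nonneg fun _ _ => abs_nonneg _)
        fun p hp => sum_abs_ramPrime (hS p hp).1 (fun h => (hS p hp).2 (by exact_mod_cast h)) _

lemma sum_ram_mul_ram_eq_zero {y : ℕ} {S T : Finset ℕ} (hS : ∀ p ∈ S, p.Prime ∧ ¬ p ∣ y)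
    (hT : ∀ p ∈ T, p.Prime ∧ ¬ p ∣ y) (hST : S ≠ T) (a b : ℤ) :
    ∑ m ∈ Finset.range (∏ p ∈ S ∪ T, p), ram S (y * m + a) * ram T (y * m + b) = 0 := by
  have hU : ∀ p ∈ S ∪ T, p.Prime ∧ ¬ p ∣ y := fun p hp =>
    (Finset.mem_union.1 hp).elim (hS p) (hT p)
  have h1 := sum_range_prod_periodic (S := S ∪ T)
    (h := fun p m => (if p ∈ S then ramPrime p ((y : ℤ) * m + a) else 1) *
      (if p ∈ T then ramPrime p ((y : ℤ) * m + b) else 1))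
    (fun p hp => (hU p hp).1) (fun p _ => by
      refine Function.Periodic.mul (f := fun m : ℕ => if p ∈ S then _ else _)
        (g := fun m : ℕ => if p ∈ T then _ else _) ?_ ?_
      · split_ifs
        · exact ramPrime_periodic p _ _
        · intro m; rfl
      · split_ifs
        · exact ramPrime_periodic p _ _
        · intro m; rfl)
  have h2 : ∀ m : ℕ, ram S (y * m + a) * ram T (y * m + b) =
      ∏ p ∈ S ∪ T, ((if p ∈ S then ramPrime p ((y : ℤ) * m + a) else 1) *
      (if p ∈ T then ramPrime p ((y : ℤ) * m + b) else 1)) := by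
    intro m
    rw [Finset.prod_mul_distrib, Finset.prod_ite_mem, Finset.prod_ite_mem,
      Finset.union_inter_cancel_left, Finset.union_inter_cancel_right]
    rfl
  simp only [h2, h1]
  have : ∃ p ∈ S ∪ T, ¬ (p ∈ S ↔ p ∈ T) := by
    by_contra hcon
    push Not at hcon
    apply hST
    ext p
    by_cases hp : p ∈ S ∪ T
    · exact hcon p hp
    · simp only [Finset.mem_union] at hp; tauto
  obtain ⟨p, hp, hpe⟩ := this
  refine Finset.prod_eq_zero hp ?_
  have hy : ¬ (p : ℤ) ∣ (y : ℤ) := fun h => (hU p hp).2 (by exact_mod_cast h)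
  by_cases hpS : p ∈ S
  · have hpT : p ∉ T := by tauto
    simp only [hpS, hpT, if_true, if_false, mul_one]
    exact sum_ramPrime (hU p hp).1 hy a
  · have hpT : p ∈ T := by tauto
    simp only [hpS, hpT, if_true, if_false, one_mul]
    exact sum_ramPrime (hU p hp).1 hy b

lemma abs_sum_range_le_of_vanishing {h : ℕ → ℝ} {T : ℕ} {B : ℝ} (hT : 0 < T) (hB : ∀ m, |h m| ≤ B)
    (h0 : ∀ a, ∑ i ∈ Finset.range T, h (a + i) = 0) (l : ℕ) :
    ∀ a, |∑ i ∈ Finset.range l, h (a + i)| ≤ T * B := by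
  have hB0 : 0 ≤ B := (abs_nonneg _).trans (hB 0)
  induction l using Nat.strong_induction_on with
  | _ l ih =>
    intro a
    rcases lt_or_ge l T with hl | hl
    · calc |∑ i ∈ Finset.range l, h (a + i)| ≤ ∑ i ∈ Finset.range l, |h (a + i)| :=
            Finset.abs_sum_le_sum_abs _ _
        _ ≤ ∑ i ∈ Finset.range l, B := Finset.sum_le_sum fun i _ => hB _
        _ = l * B := by simp
        _ ≤ T * B := by gcongr
    · obtain ⟨k, rfl⟩ := Nat.exists_eq_add_of_le hl
      rw [Finset.sum_range_add, h0, zero_add]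
      have := ih k (by omega) (a + T)
      simpa only [add_assoc] using this

lemma sum_range_mul_of_periodic {h : ℕ → ℝ} {T : ℕ} (hh : Function.Periodic h T) (t : ℕ) :
    ∑ m ∈ Finset.range (T * t), h m = t * ∑ m ∈ Finset.range T, h m := by
  induction t with
  | zero => simp
  | succ t ih =>
    rw [mul_add, mul_one, Finset.sum_range_add, ih]
    have : ∀ i, h (T * t + i) = h i := fun i => by
      have := hh.nat_mul t i
      rw [add_comm, mul_comm]
      exact this
    simp only [this]
    push_cast
    ring

lemma ram_periodic (S : Finset ℕ) (c a : ℤ) :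
    Function.Periodic (fun m : ℕ => ram S (c * m + a)) (∏ p ∈ S, p) :=
  periodic_prod fun p _ => ramPrime_periodic p c a

/-! ### The one-sided maximal function on a finite abelian group -/

/-- The average of `f` along `K + 1` backward steps of length `s`. -/
def stepAvg {G : Type*} [AddCommGroup G] (s : G) (f : G → ℝ) (K : ℕ) (x : G) : ℝ :=
  (∑ k ∈ Finset.range (K + 1), f (x - k • s)) / ((K : ℝ) + 1)

/-- The maximal function over the averages of length at most `B + 1`. -/
def maxAvg {G : Type*} [AddCommGroup G] (B : ℕ) (s : G) (f : G → ℝ) (x : G) : ℝ :=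
  (Finset.range (B + 1)).sup' Finset.nonempty_range_add_one (fun K => stepAvg s f K x)

lemma stepAvg_le_maxAvg {G : Type*} [AddCommGroup G] {B K : ℕ} (hK : K ≤ B) (s : G)
    (f : G → ℝ) (x : G) :
    stepAvg s f K x ≤ maxAvg B s f x :=
  Finset.le_sup' (fun K => stepAvg s f K x) (by simpa using by omega)

lemma maxAvg_nonneg {G : Type*} [AddCommGroup G] {B : ℕ} {s : G} {f : G → ℝ}
    (hf : ∀ x, 0 ≤ f x) (x : G) :
    0 ≤ maxAvg B s f x := by
  refine le_trans ?_ (stepAvg_le_maxAvg (Nat.zero_le B) s f x)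
  unfold stepAvg
  exact div_nonneg (Finset.sum_nonneg fun _ _ => hf _) (by positivity)

lemma maxAvg_le_one {G : Type*} [AddCommGroup G] {B : ℕ} {s : G} {f : G → ℝ}
    (hf : ∀ x, f x ≤ 1) (x : G) :
    maxAvg B s f x ≤ 1 := by
  refine Finset.sup'_le _ _ fun K _ => ?_
  unfold stepAvg
  rw [div_le_one (by positivity)]
  calc _ ≤ ∑ k ∈ Finset.range (K + 1), (1 : ℝ) := Finset.sum_le_sum fun _ _ => hf _
    _ = _ := by simp

lemma sum_sub_right {G : Type*} [AddCommGroup G] [Fintype G]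
    (f : G → ℝ) (a : G) : ∑ x, f (x - a) = ∑ x, f x :=
  Equiv.sum_comp (Equiv.subRight a) f

/-- The maximal ergodic theorem. -/
lemma mul_card_maxAvg_gt_le {G : Type*} [AddCommGroup G] [Fintype G]
    (B : ℕ) (s : G) (f : G → ℝ) (t : ℝ) :
    t * ((Finset.univ.filter (fun x => t < maxAvg B s f x)).card : ℝ) ≤
      ∑ x ∈ Finset.univ.filter (fun x => t < maxAvg B s f x), f x := by
  set E := Finset.univ.filter (fun x => t < maxAvg B s f x) with hE
  set S : ℕ → G → ℝ := fun k x => ∑ i ∈ Finset.range k, (f (x - i • s) - t) with hS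
  set Mx : G → ℝ := fun x =>
    (Finset.range (B + 2)).sup' Finset.nonempty_range_add_one (fun k => S k x) with hMx
  have hM0 : ∀ x, 0 ≤ Mx x := fun x => by
    have : S 0 x ≤ Mx x := Finset.le_sup' (fun k => S k x) (by simp)
    simpa [hS] using this
  have hSk : ∀ k ≤ B + 1, ∀ x, S k x ≤ Mx x := fun k hk x =>
    Finset.le_sup' (fun k => S k x) (by simpa using by omega)
  have hSavg : ∀ K x, S (K + 1) x = ((K : ℝ) + 1) * (stepAvg s f K x - t) := by
    intro K x
    simp only [hS, stepAvg, Finset.sum_sub_distrib, Finset.sum_const, Finset.card_range,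
      nsmul_eq_mul]
    have : (K : ℝ) + 1 ≠ 0 := by positivity
    field_simp
    push_cast
    ring
  have hmem : ∀ x, x ∉ E → Mx x = 0 := by
    intro x hx
    refine le_antisymm (Finset.sup'_le _ _ fun k _ => ?_) (hM0 x)
    rcases k with _ | K
    · simp [hS]
    · rw [hSavg]
      have hx' : maxAvg B s f x ≤ t := by simpa [hE] using hx
      have hKB : K ≤ B := by simp at *; omega
      have := (stepAvg_le_maxAvg hKB s f x).trans hx'
      exact mul_nonpos_of_nonneg_of_nonpos (by positivity) (by linarith)
  have hrec : ∀ x ∈ E, Mx x ≤ f x - t + Mx (x - s) := by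
    intro x hx
    obtain ⟨K, hK, hKx⟩ : ∃ K ∈ Finset.range (B + 1), t < stepAvg s f K x := by
      have : t < maxAvg B s f x := by simpa [hE] using hx
      exact (Finset.lt_sup'_iff _).1 this
    have hpos : 0 < Mx x := by
      refine lt_of_lt_of_le ?_ (hSk (K + 1) (by simp at hK; omega) x)
      rw [hSavg]
      exact mul_pos (by positivity) (by linarith)
    obtain ⟨k, hk, hkx⟩ := Finset.exists_mem_eq_sup' (Finset.nonempty_range_add_one (n := B + 1))
      (fun k => S k x)
    have hkx' : Mx x = S k x := hkx
    rcases k with _ | k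
    · rw [hkx'] at hpos; simp [hS] at hpos
    · have : S (k + 1) x = f x - t + S k (x - s) := by
        simp only [hS]
        rw [Finset.sum_range_succ']
        simp only [zero_smul, sub_zero, add_comm (f x - t)]
        congr 1
        refine Finset.sum_congr rfl fun i _ => ?_
        rw [add_smul, one_smul, sub_sub, add_comm s]
      rw [hkx', this]
      have := hSk k (by simp at hk; omega) (x - s)
      linarith
  have h1 : ∑ x ∈ E, (Mx x - Mx (x - s)) ≤ ∑ x ∈ E, (f x - t) :=
    Finset.sum_le_sum fun x hx => by linarith [hrec x hx]
  have h2 : 0 ≤ ∑ x ∈ E, (Mx x - Mx (x - s)) := by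
    have e1 : ∑ x ∈ E, Mx x = ∑ x, Mx x :=
      Finset.sum_subset (Finset.subset_univ _) fun x _ hx => hmem x hx
    have e2 : ∑ x ∈ E, Mx (x - s) ≤ ∑ x, Mx (x - s) :=
      Finset.sum_le_sum_of_subset_of_nonneg (Finset.subset_univ _) fun x _ _ => hM0 _
    rw [sum_sub_right] at e2
    rw [Finset.sum_sub_distrib]
    linarith
  have h3 : ∑ x ∈ E, (f x - t) = ∑ x ∈ E, f x - E.card * t := by
    rw [Finset.sum_sub_distrib, Finset.sum_const, nsmul_eq_mul]
  linarith

/-- The `ℓ²` norm of a function on a finite set. -/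
def l2 {X : Type*} [Fintype X] (f : X → ℝ) : ℝ := Real.sqrt (∑ x, f x ^ 2)

lemma l2_eq_norm {X : Type*} [Fintype X] (f : X → ℝ) :
    l2 f = ‖(WithLp.toLp 2 f : EuclideanSpace ℝ X)‖ := by
  rw [EuclideanSpace.norm_eq]
  simp [l2]

lemma l2_nonneg {X : Type*} [Fintype X] (f : X → ℝ) : 0 ≤ l2 f := Real.sqrt_nonneg _

lemma l2_sq {X : Type*} [Fintype X] (f : X → ℝ) : l2 f ^ 2 = ∑ x, f x ^ 2 :=
  Real.sq_sqrt (Finset.sum_nonneg fun _ _ => sq_nonneg _)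

lemma l2_sum_le {X ι : Type*} [Fintype X] (s : Finset ι) (f : ι → X → ℝ) :
    l2 (fun x => ∑ i ∈ s, f i x) ≤ ∑ i ∈ s, l2 (f i) := by
  simp only [l2_eq_norm]
  refine le_trans (le_of_eq ?_) (norm_sum_le s fun i => (WithLp.toLp 2 (f i) : EuclideanSpace ℝ X))
  congr 1
  ext x
  simp

lemma l2_const_mul {X : Type*} [Fintype X] (c : ℝ) (f : X → ℝ) :
    l2 (fun x => c * f x) = |c| * l2 f := by
  unfold l2
  simp only [mul_pow]
  rw [← Finset.mul_sum, Real.sqrt_mul (sq_nonneg c), Real.sqrt_sq_eq_abs]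

lemma l2_abs {X : Type*} [Fintype X] (f : X → ℝ) : l2 (fun x => |f x|) = l2 f := by
  simp [l2]

lemma l2_sub_right {G : Type*} [AddCommGroup G] [Fintype G]
    (f : G → ℝ) (a : G) : l2 (fun x => f (x - a)) = l2 f := by
  unfold l2
  rw [sum_sub_right (fun x => f x ^ 2)]

lemma sum_mul_le_l2 {X : Type*} [Fintype X] (f g : X → ℝ) : ∑ x, f x * g x ≤ l2 f * l2 g := by
  have := Finset.sum_mul_sq_le_sq_mul_sq Finset.univ f g
  rw [← l2_sq, ← l2_sq, ← mul_pow] at this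
  exact (abs_le_of_sq_le_sq' this (mul_nonneg (l2_nonneg f) (l2_nonneg g))).2

/-- Integrating the distributional inequality of a maximal function. -/
lemma sum_sq_le_of_weak {X : Type*} [Fintype X] {f g : X → ℝ} (hg : ∀ x, 0 ≤ g x)
    (h : ∀ t : ℝ, t * ((Finset.univ.filter (fun x => t < g x)).card : ℝ) ≤
      ∑ x ∈ Finset.univ.filter (fun x => t < g x), f x) :
    ∑ x, g x ^ 2 ≤ 2 * ∑ x, f x * g x := by
  obtain ⟨T, hT⟩ : ∃ T, ∀ x, g x ≤ T := by
    refine ⟨∑ x, g x, fun x => Finset.single_le_sum (fun x _ => hg x) (Finset.mem_univ x)⟩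
  have h_int : ∀ (x : X) (u : ℝ → ℝ), Continuous u →
      MeasureTheory.IntegrableOn (fun t => if t < g x then u t else 0) (Set.Ioc 0 T) := by
    intro x u hu
    have h1 : MeasureTheory.IntegrableOn u (Set.Ioc 0 T) :=
      (hu.integrableOn_Icc).mono_set Set.Ioc_subset_Icc_self
    have h2 : (fun t => if t < g x then u t else 0) = Set.indicator (Set.Iio (g x)) u := by
      ext t; simp [Set.indicator]
    rw [h2]
    exact h1.indicator measurableSet_Iio
  have hval : ∀ (x : X) (u : ℝ → ℝ), ∫ t in Set.Ioc 0 T, (if t < g x then u t else 0) =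
      ∫ t in (0 : ℝ)..(g x), u t := by
    intro x u
    have h2 : (fun t => if t < g x then u t else 0) = Set.indicator (Set.Iio (g x)) u := by
      ext t; simp [Set.indicator]
    rw [h2, MeasureTheory.setIntegral_indicator measurableSet_Iio,
      intervalIntegral.integral_of_le (hg x), MeasureTheory.integral_Ioc_eq_integral_Ioo]
    have : Set.Ioc 0 T ∩ Set.Iio (g x) = Set.Ioo 0 (g x) := by
      ext t
      simp only [Set.mem_inter_iff, Set.mem_Ioc, Set.mem_Iio, Set.mem_Ioo]
      constructor
      · tauto
      · rintro ⟨a, b⟩; exact ⟨⟨a, b.le.trans (hT x)⟩, b⟩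
    rw [this]
  have hmono : ∫ t in Set.Ioc 0 T, ∑ x, (if t < g x then t else 0) ≤
      ∫ t in Set.Ioc 0 T, ∑ x, (if t < g x then f x else 0) := by
    refine MeasureTheory.integral_mono (MeasureTheory.integrable_finsetSum _ fun x _ =>
      h_int x (fun t => t) continuous_id) (MeasureTheory.integrable_finsetSum _ fun x _ =>
      h_int x (fun _ => f x) continuous_const) fun t => ?_
    have := h t
    simp only [Finset.sum_ite, Finset.sum_const_zero, add_zero, Finset.sum_const, nsmul_eq_mul]
    linarith
  rw [MeasureTheory.integral_finsetSum _ fun x _ => h_int x (fun t => t) continuous_id,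
    MeasureTheory.integral_finsetSum _ fun x _ => h_int x (fun _ => f x) continuous_const] at hmono
  simp only [hval _ (fun t => t), hval _ (fun _ => f _)] at hmono
  simp only [integral_id, intervalIntegral.integral_const, sub_zero, smul_eq_mul] at hmono
  have e : ∑ x, (g x ^ 2 - 0 ^ 2) / 2 = (∑ x, g x ^ 2) / 2 := by
    rw [Finset.sum_div]; simp
  rw [e] at hmono
  simp only [mul_comm (g _)] at hmono
  linarith

lemma l2_maxAvg_le {G : Type*} [AddCommGroup G] [Fintype G]
    (B : ℕ) (s : G) {f : G → ℝ} (hf : ∀ x, 0 ≤ f x) :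
    l2 (maxAvg B s f) ≤ 2 * l2 f := by
  have h1 := sum_sq_le_of_weak (fun x => maxAvg_nonneg hf x)
    (fun t => mul_card_maxAvg_gt_le B s f t)
  rw [← l2_sq] at h1
  have h2 := sum_mul_le_l2 f (maxAvg B s f)
  have h3 := l2_nonneg (maxAvg B s f)
  have h4 := l2_nonneg f
  by_contra hcon
  push Not at hcon
  nlinarith

lemma card_maxAvg_gt_le {G : Type*} [AddCommGroup G] [Fintype G]
    (B : ℕ) (s : G) {f : G → ℝ} (hf : ∀ x, 0 ≤ f x) {t : ℝ} (ht : 0 < t) :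
    ((Finset.univ.filter (fun x => t < maxAvg B s f x)).card : ℝ) ≤ (∑ x, f x) / t := by
  rw [le_div_iff₀ ht, mul_comm]
  exact (mul_card_maxAvg_gt_le B s f t).trans
    (Finset.sum_le_sum_of_subset_of_nonneg (Finset.subset_univ _) fun x _ _ => hf x)

/-! ### Almost orthogonal projections onto the frequencies of Ramanujan sums -/

/-- The length of the averages defining `proj`. -/
def projLen (Q : Finset ℕ) : ℕ := 64 * (∏ p ∈ Q, p) ^ 5

/-- The averaged convolution with the Ramanujan sum of `Q`, along multiples of `y`. -/
def proj {G : Type*} [AddCommGroup G] (y : ℕ) (Q : Finset ℕ) (u : G) (f : G → ℝ) (x : G) : ℝ :=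
  ∑ m ∈ Finset.range (projLen Q), ram Q ((y : ℤ) * m) / projLen Q * f (x - (y * m) • u)

/-- The adjoint of `proj`. -/
def adjProj {G : Type*} [AddCommGroup G] (y : ℕ) (Q : Finset ℕ) (u : G) (g : G → ℝ) (x : G) : ℝ :=
  ∑ m ∈ Finset.range (projLen Q), ram Q ((y : ℤ) * m) / projLen Q * g (x + (y * m) • u)

lemma projLen_pos {Q : Finset ℕ} (hQ : ∀ p ∈ Q, p.Prime) : 0 < projLen Q := by
  have := prod_pos_of_prime hQ
  unfold projLen
  positivity

lemma sum_abs_ram_div_projLen_le {y : ℕ} {Q : Finset ℕ} (hQ : ∀ p ∈ Q, p.Prime ∧ ¬ p ∣ y) :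
    ∑ m ∈ Finset.range (projLen Q), |ram Q ((y : ℤ) * m) / projLen Q| ≤ 2 ^ Q.card := by
  have hL := projLen_pos fun p hp => (hQ p hp).1
  have hL' : (0 : ℝ) < projLen Q := by exact_mod_cast hL
  simp only [abs_div, abs_of_pos hL']
  rw [← Finset.sum_div, div_le_iff₀ hL']
  have hper : Function.Periodic (fun m : ℕ => |ram Q ((y : ℤ) * m)|) (∏ p ∈ Q, p) := fun m => by
    have := ram_periodic Q y 0 m
    simp only [add_zero] at this
    simp only [this]
  have e : projLen Q = (∏ p ∈ Q, p) * (64 * (∏ p ∈ Q, p) ^ 4) := by unfold projLen; ring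
  rw [e, sum_range_mul_of_periodic hper]
  have := mul_le_mul_of_nonneg_left (sum_abs_ram_le hQ)
    (Nat.cast_nonneg (α := ℝ) (64 * (∏ p ∈ Q, p) ^ 4))
  refine this.trans (le_of_eq ?_)
  push_cast
  ring

lemma sum_add_right_eq {G : Type*} [AddCommGroup G] [Fintype G] (f : G → ℝ) (a : G) :
    ∑ x, f (x + a) = ∑ x, f x :=
  Equiv.sum_comp (Equiv.addRight a) f

lemma l2_add_right {G : Type*} [AddCommGroup G] [Fintype G] (f : G → ℝ) (a : G) :
    l2 (fun x => f (x + a)) = l2 f := by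
  simpa using l2_sub_right f (-a)

lemma l2_adjProj_le {G : Type*} [AddCommGroup G] [Fintype G] {y : ℕ} {Q : Finset ℕ}
    (hQ : ∀ p ∈ Q, p.Prime ∧ ¬ p ∣ y) (u : G) (g : G → ℝ) :
    l2 (adjProj y Q u g) ≤ 2 ^ Q.card * l2 g := by
  refine (l2_sum_le _ _).trans ?_
  simp only [l2_const_mul, l2_add_right]
  rw [← Finset.sum_mul]
  exact mul_le_mul_of_nonneg_right (sum_abs_ram_div_projLen_le hQ) (l2_nonneg g)

lemma abs_bilinear_le {L L' : ℕ} {a a' Γ : ℕ → ℝ} {κ β : ℝ}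
    (hκ : ∀ h, |∑ m ∈ Finset.Ico (L - h) (min L (L + L' - h)), a m * a' (m + h - L)| ≤ κ)
    (hΓ : ∀ h, |Γ h| ≤ β) :
    |∑ m ∈ Finset.range L, ∑ m' ∈ Finset.range L', a m * a' m' * Γ (m' + L - m)| ≤
      (L + L') * (κ * β) := by
  have h1 : ∑ m ∈ Finset.range L, ∑ m' ∈ Finset.range L', a m * a' m' * Γ (m' + L - m) =
      ∑ h ∈ Finset.range (L + L'),
        (∑ m ∈ Finset.Ico (L - h) (min L (L + L' - h)), a m * a' (m + h - L)) * Γ h := by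
    simp only [Finset.sum_mul]
    rw [Finset.sum_sigma', Finset.sum_sigma']
    refine Finset.sum_nbij' (fun p => ⟨p.2 + L - p.1, p.1⟩) (fun p => ⟨p.2, p.2 + p.1 - L⟩)
      ?_ ?_ ?_ ?_ ?_
    · rintro ⟨m, m'⟩ h
      simp only [Finset.mem_sigma, Finset.mem_range, Finset.mem_Ico, lt_min_iff] at h ⊢
      omega
    · rintro ⟨m, m'⟩ h
      simp only [Finset.mem_sigma, Finset.mem_range, Finset.mem_Ico, lt_min_iff] at h ⊢
      omega
    · rintro ⟨m, m'⟩ h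
      simp only [Finset.mem_sigma, Finset.mem_range] at h ⊢
      simp only [Sigma.mk.injEq, heq_eq_eq, true_and]
      omega
    · rintro ⟨m, m'⟩ h
      simp only [Finset.mem_sigma, Finset.mem_range, Finset.mem_Ico, lt_min_iff] at h ⊢
      simp only [Sigma.mk.injEq, heq_eq_eq, and_true]
      omega
    · rintro ⟨m, m'⟩ h
      simp only [Finset.mem_sigma, Finset.mem_range] at h ⊢
      congr 3
      omega
  rw [h1]
  refine (Finset.abs_sum_le_sum_abs _ _).trans ?_
  calc _ ≤ ∑ h ∈ Finset.range (L + L'), κ * β := Finset.sum_le_sum fun h _ => by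
        rw [abs_mul]
        exact mul_le_mul (hκ h) (hΓ h) (abs_nonneg _) ((abs_nonneg _).trans (hκ h))
    _ = _ := by simp

lemma abs_sum_mul_le_l2 {X : Type*} [Fintype X] (f g : X → ℝ) :
    |∑ x, f x * g x| ≤ l2 f * l2 g := by
  refine abs_le.2 ⟨?_, sum_mul_le_l2 f g⟩
  have := sum_mul_le_l2 (fun x => -f x) g
  have e : l2 (fun x => -f x) = l2 f := by simp [l2]
  simp only [e, neg_mul, Finset.sum_neg_distrib] at this
  linarith

lemma abs_sum_Ico_ram_mul_ram_le {y : ℕ} {S T : Finset ℕ} (hS : ∀ p ∈ S, p.Prime ∧ ¬ p ∣ y)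
    (hT : ∀ p ∈ T, p.Prime ∧ ¬ p ∣ y) (hST : S ≠ T) (L L' h : ℕ) :
    |∑ m ∈ Finset.Ico (L - h) (min L (L + L' - h)),
      ram S ((y : ℤ) * m) * ram T ((y : ℤ) * ((m + h - L : ℕ) : ℤ))| ≤
      (((∏ p ∈ S, p : ℕ) : ℝ) * ((∏ p ∈ T, p : ℕ) : ℝ)) ^ 2 := by
  set H : ℕ → ℝ := fun m => ram S ((y : ℤ) * m) * ram T ((y : ℤ) * m + (y : ℤ) * ((h : ℤ) - L))
    with hH
  have hSp : ∀ p ∈ S, p.Prime := fun p hp => (hS p hp).1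
  have hTp : ∀ p ∈ T, p.Prime := fun p hp => (hT p hp).1
  have hUp : ∀ p ∈ S ∪ T, p.Prime := fun p hp => (Finset.mem_union.1 hp).elim (hSp p) (hTp p)
  have h1 : ∑ m ∈ Finset.Ico (L - h) (min L (L + L' - h)),
      ram S ((y : ℤ) * m) * ram T ((y : ℤ) * ((m + h - L : ℕ) : ℤ)) =
      ∑ i ∈ Finset.range (min L (L + L' - h) - (L - h)), H (L - h + i) := by
    rw [← Finset.sum_Ico_eq_sum_range]
    refine Finset.sum_congr rfl fun m hm => ?_
    rw [Finset.mem_Ico] at hm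
    simp only [hH]
    rw [Nat.cast_sub (by omega)]
    push_cast
    congr 2
    ring
  have hB : ∀ m, |H m| ≤ ((∏ p ∈ S, p : ℕ) : ℝ) * ((∏ p ∈ T, p : ℕ) : ℝ) := fun m => by
    simp only [hH, abs_mul]
    exact mul_le_mul (abs_ram_le hSp _) (abs_ram_le hTp _) (abs_nonneg _) (Nat.cast_nonneg _)
  have h0 : ∀ a, ∑ i ∈ Finset.range (∏ p ∈ S ∪ T, p), H (a + i) = 0 := fun a => by
    rw [← sum_ram_mul_ram_eq_zero hS hT hST (y * a) (y * a + y * (h - L))]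
    refine Finset.sum_congr rfl fun i _ => ?_
    simp only [hH]
    push_cast
    congr 2 <;> ring
  rw [h1]
  refine (abs_sum_range_le_of_vanishing (prod_pos_of_prime hUp) hB h0 _ _).trans ?_
  rw [sq]
  refine mul_le_mul_of_nonneg_right ?_ (by positivity)
  have e := Finset.prod_union_inter (s₁ := S) (s₂ := T) (f := fun p : ℕ => p)
  have hI : 1 ≤ ∏ p ∈ S ∩ T, p :=
    prod_pos_of_prime fun p hp => hSp p (Finset.mem_of_mem_inter_left hp)
  have : ∏ p ∈ S ∪ T, p ≤ (∏ p ∈ S, p) * ∏ p ∈ T, p := by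
    rw [← e]; exact Nat.le_mul_of_pos_right _ hI
  exact_mod_cast this

lemma abs_sum_adjProj_mul_le {G : Type*} [AddCommGroup G] [Fintype G] {y : ℕ} {S T : Finset ℕ}
    (hS : ∀ p ∈ S, p.Prime ∧ ¬ p ∣ y) (hT : ∀ p ∈ T, p.Prime ∧ ¬ p ∣ y) (hST : S ≠ T)
    (u : G) (g g' : G → ℝ) :
    |∑ x, adjProj y S u g x * adjProj y T u g' x| ≤
      (((projLen S : ℝ) + projLen T) / (projLen S * projLen T) *
        (((∏ p ∈ S, p : ℕ) : ℝ) * ((∏ p ∈ T, p : ℕ) : ℝ)) ^ 2) * (l2 g * l2 g') := by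
  set L := projLen S with hL
  set L' := projLen T with hL'
  have hLp : (0 : ℝ) < L := by exact_mod_cast projLen_pos fun p hp => (hS p hp).1
  have hLp' : (0 : ℝ) < L' := by exact_mod_cast projLen_pos fun p hp => (hT p hp).1
  set Γ : ℕ → ℝ := fun h => ∑ x, g (x + (y * L) • u) * g' (x + (y * h) • u) with hΓ
  have hΓb : ∀ h, |Γ h| ≤ l2 g * l2 g' := fun h => by
    have := abs_sum_mul_le_l2 (fun x => g (x + (y * L) • u)) (fun x => g' (x + (y * h) • u))
    rwa [l2_add_right, l2_add_right] at this
  have h1 : ∑ x, adjProj y S u g x * adjProj y T u g' x =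
      ∑ m ∈ Finset.range L, ∑ m' ∈ Finset.range L',
        (ram S ((y : ℤ) * m) / L) * (ram T ((y : ℤ) * m') / L') * Γ (m' + L - m) := by
    unfold adjProj
    simp only [Finset.sum_mul_sum]
    rw [Finset.sum_comm]
    refine Finset.sum_congr rfl fun m hm => ?_
    rw [Finset.sum_comm]
    refine Finset.sum_congr rfl fun m' _ => ?_
    have hmL : m ≤ L := (Finset.mem_range.1 hm).le
    simp only [hΓ]
    rw [← sum_add_right_eq _ ((y * (L - m)) • u), Finset.mul_sum]
    refine Finset.sum_congr rfl fun x _ => ?_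
    have e1 : x + (y * (L - m)) • u + (y * m) • u = x + (y * L) • u := by
      rw [add_assoc, ← add_smul, ← mul_add, Nat.sub_add_cancel hmL]
    have e2 : x + (y * (L - m)) • u + (y * m') • u = x + (y * (m' + L - m)) • u := by
      rw [add_assoc, ← add_smul, ← mul_add]
      congr 3
      omega
    rw [e1, e2]
    ring
  have h2 := abs_bilinear_le (L := L) (L' := L') (a := fun m => ram S ((y : ℤ) * m) / L)
    (a' := fun m => ram T ((y : ℤ) * m) / L') (Γ := Γ)
    (κ := (((∏ p ∈ S, p : ℕ) : ℝ) * ((∏ p ∈ T, p : ℕ) : ℝ)) ^ 2 / (L * L'))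
    (fun h => by
      have := abs_sum_Ico_ram_mul_ram_le hS hT hST L L' h
      simp only [div_mul_div_comm]
      rw [← Finset.sum_div, abs_div, abs_of_pos (mul_pos hLp hLp')]
      gcongr) hΓb
  rw [h1]
  refine h2.trans (le_of_eq ?_)
  field_simp

lemma sum_proj_mul {G : Type*} [AddCommGroup G] [Fintype G] (y : ℕ) (Q : Finset ℕ) (u : G)
    (f g : G → ℝ) : ∑ x, proj y Q u f x * g x = ∑ x, f x * adjProj y Q u g x := by
  unfold proj adjProj
  simp only [Finset.sum_mul, Finset.mul_sum]
  rw [Finset.sum_comm, Finset.sum_comm (s := Finset.univ)]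
  refine Finset.sum_congr rfl fun m _ => ?_
  rw [← sum_add_right_eq _ ((y * m) • u)]
  refine Finset.sum_congr rfl fun x _ => ?_
  rw [add_sub_cancel_right]
  ring

/-- The projections attached to moduli of a dyadic block are almost orthogonal. -/
lemma sum_l2_proj_sq_le {G : Type*} [AddCommGroup G] [Fintype G] {y Y : ℕ} (hY : 1 ≤ Y) {A : ℝ}
    {s : Finset (Finset ℕ)} (hs : ∀ Q ∈ s, ∀ p ∈ Q, p.Prime ∧ ¬ p ∣ y)
    (hsY : ∀ Q ∈ s, Y ≤ ∏ p ∈ Q, p ∧ ∏ p ∈ Q, p < 2 * Y) (hA0 : 0 ≤ A)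
    (hA : ∀ Q ∈ s, (4 : ℝ) ^ Q.card ≤ A)
    (u : G) (f : G → ℝ) :
    ∑ Q ∈ s, l2 (proj y Q u f) ^ 2 ≤ (A + 1) * l2 f ^ 2 := by
  set g : Finset ℕ → G → ℝ := fun Q => proj y Q u f with hg
  set W := ∑ Q ∈ s, l2 (g Q) ^ 2 with hW
  set V : G → ℝ := fun x => ∑ Q ∈ s, adjProj y Q u (g Q) x with hV
  have hYr : (1 : ℝ) ≤ Y := by exact_mod_cast hY
  have hW0 : 0 ≤ W := Finset.sum_nonneg fun _ _ => sq_nonneg _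
  have hdual : W ≤ l2 f * l2 V := by
    have : W = ∑ x, f x * V x := by
      simp only [hV, Finset.mul_sum]
      rw [Finset.sum_comm]
      refine Finset.sum_congr rfl fun Q _ => ?_
      rw [← sum_proj_mul, l2_sq]
      exact Finset.sum_congr rfl fun x _ => sq _
    rw [this]
    exact sum_mul_le_l2 _ _
  have hcard : (s.card : ℝ) ≤ Y := by
    have h1 : s.card ≤ (Finset.Ico Y (2 * Y)).card := by
      refine Finset.card_le_card_of_injOn (fun Q => ∏ p ∈ Q, p) (fun Q hQ => ?_) ?_
      · simpa using hsY Q hQ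
      · exact prod_primes_injOn.mono fun Q hQ p hp => (hs Q hQ p hp).1
    rw [Nat.card_Ico] at h1
    exact_mod_cast (by omega : s.card ≤ Y)
  have hpair : ∀ Q ∈ s, ∀ Q' ∈ s, ∑ x, adjProj y Q u (g Q) x * adjProj y Q' u (g Q') x ≤
      (if Q = Q' then A * l2 (g Q) ^ 2 else 0) + 1 / (2 * Y) * (l2 (g Q) * l2 (g Q')) := by
    intro Q hQ Q' hQ'
    have hpos : 0 ≤ 1 / (2 * (Y : ℝ)) * (l2 (g Q) * l2 (g Q')) :=
      mul_nonneg (by positivity) (mul_nonneg (l2_nonneg _) (l2_nonneg _))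
    split_ifs with h
    · subst h
      have h1 := l2_adjProj_le (hs Q hQ) u (g Q)
      have h2 : ∑ x, adjProj y Q u (g Q) x * adjProj y Q u (g Q) x ≤ A * l2 (g Q) ^ 2 := by
        calc _ = l2 (adjProj y Q u (g Q)) ^ 2 := by
              rw [l2_sq]; exact Finset.sum_congr rfl fun x _ => (sq _).symm
          _ ≤ (2 ^ Q.card * l2 (g Q)) ^ 2 := pow_le_pow_left₀ (l2_nonneg _) h1 2
          _ = 4 ^ Q.card * l2 (g Q) ^ 2 := by
              rw [mul_pow, ← pow_mul, mul_comm Q.card, pow_mul]; norm_num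
          _ ≤ _ := mul_le_mul_of_nonneg_right (hA Q hQ) (sq_nonneg _)
      linarith
    · rw [zero_add]
      refine (le_abs_self _).trans ((abs_sum_adjProj_mul_le (hs Q hQ) (hs Q' hQ') h u _ _).trans ?_)
      refine mul_le_mul_of_nonneg_right ?_ (mul_nonneg (l2_nonneg _) (l2_nonneg _))
      obtain ⟨a1, a2⟩ := hsY Q hQ
      obtain ⟨b1, b2⟩ := hsY Q' hQ'
      set q := ∏ p ∈ Q, p
      set q' := ∏ p ∈ Q', p
      have a1' : (Y : ℝ) ≤ q := by exact_mod_cast a1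
      have a2' : (q : ℝ) ≤ 2 * Y := by exact_mod_cast a2.le
      have b1' : (Y : ℝ) ≤ q' := by exact_mod_cast b1
      have b2' : (q' : ℝ) ≤ 2 * Y := by exact_mod_cast b2.le
      have hLQ : (projLen Q : ℝ) = 64 * (q : ℝ) ^ 5 := by simp [projLen, q]
      have hLQ' : (projLen Q' : ℝ) = 64 * (q' : ℝ) ^ 5 := by simp [projLen, q']
      have hYp : (0 : ℝ) < Y := by linarith
      have hqp : (0 : ℝ) < q := by linarith
      have hqp' : (0 : ℝ) < q' := by linarith
      have e : ((projLen Q : ℝ) + projLen Q') / (projLen Q * projLen Q') * ((q : ℝ) * q') ^ 2 =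
          ((q : ℝ) * q') ^ 2 / (64 * (q : ℝ) ^ 5) + ((q : ℝ) * q') ^ 2 / (64 * (q' : ℝ) ^ 5) := by
        rw [hLQ, hLQ']; field_simp; ring
      rw [e]
      have k1 : ((q : ℝ) * q') ^ 2 ≤ ((2 * Y) * (2 * Y)) ^ 2 := by gcongr
      have k2 : (64 * (Y : ℝ) ^ 5) ≤ 64 * (q : ℝ) ^ 5 := by gcongr
      have k3 : (64 * (Y : ℝ) ^ 5) ≤ 64 * (q' : ℝ) ^ 5 := by gcongr
      calc _ ≤ ((2 * (Y : ℝ)) * (2 * Y)) ^ 2 / (64 * (Y : ℝ) ^ 5) +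
            ((2 * (Y : ℝ)) * (2 * Y)) ^ 2 / (64 * (Y : ℝ) ^ 5) := by
            gcongr
        _ = 1 / (2 * Y) := by field_simp; norm_num
  have hVsq : l2 V ^ 2 ≤ (A + 1) * W := by
    have h1 : l2 V ^ 2 = ∑ Q ∈ s, ∑ Q' ∈ s,
        ∑ x, adjProj y Q u (g Q) x * adjProj y Q' u (g Q') x := by
      rw [l2_sq]
      simp only [hV, sq, Finset.sum_mul_sum]
      rw [Finset.sum_comm]
      refine Finset.sum_congr rfl fun Q _ => Finset.sum_comm
    rw [h1]
    refine (Finset.sum_le_sum fun Q hQ => Finset.sum_le_sum fun Q' hQ' =>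
      hpair Q hQ Q' hQ').trans ?_
    simp only [Finset.sum_add_distrib, Finset.sum_ite_eq, ← Finset.mul_sum]
    rw [← Finset.sum_mul]
    have h2 : ∑ Q ∈ s, (if Q ∈ s then A * l2 (g Q) ^ 2 else 0) = A * W := by
      rw [hW, Finset.mul_sum]
      exact Finset.sum_congr rfl fun Q hQ => if_pos hQ
    have h3 : (∑ Q ∈ s, l2 (g Q)) * ∑ Q ∈ s, l2 (g Q) ≤ Y * W := by
      rw [← sq]
      refine sq_sum_le_card_mul_sum_sq.trans ?_
      exact mul_le_mul_of_nonneg_right hcard hW0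
    rw [h2]
    have h4 : 1 / (2 * (Y : ℝ)) * ((∑ Q ∈ s, l2 (g Q)) * ∑ Q ∈ s, l2 (g Q)) ≤
        1 / (2 * (Y : ℝ)) * (Y * W) := mul_le_mul_of_nonneg_left h3 (by positivity)
    have h5 : 1 / (2 * (Y : ℝ)) * (Y * W) = W / 2 := by field_simp
    linarith
  rcases hW0.eq_or_lt with h0 | h0
  · rw [← h0]
    positivity
  · have h1 : W ^ 2 ≤ l2 f ^ 2 * l2 V ^ 2 := by
      rw [← mul_pow]; exact pow_le_pow_left₀ hW0 hdual 2
    have h2 : W * W ≤ ((A + 1) * l2 f ^ 2) * W := by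
      nlinarith [mul_le_mul_of_nonneg_left hVsq (sq_nonneg (l2 f))]
    exact le_of_mul_le_mul_right h2 h0

/-! ### Averages against a Ramanujan sum -/

/-- The average of `f` along a progression, twisted by the Ramanujan sum of `Q`. -/
def ramAvg {G : Type*} [AddCommGroup G] (y : ℕ) (b : ℤ) (N : ℕ) (Q : Finset ℕ) (u : G)
    (f : G → ℝ) (x : G) : ℝ :=
  (y : ℝ) / N *
    ∑ n ∈ (Finset.range N).filter (fun n : ℕ => (n : ℤ) % (y : ℤ) = b % (y : ℤ)),
      ram Q n * f (x - n • u)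

lemma exists_crt_residue {y : ℕ} (b : ℤ) {T : Finset ℕ}
    (hT : ∀ p ∈ T, p.Prime ∧ ¬ p ∣ y) :
    ∃ a : ℕ, ∀ n : ℕ, (n : ℤ) % (y : ℤ) = b % (y : ℤ) → ((∏ p ∈ T, p : ℕ) : ℤ) ∣ n →
      ∃ k, n = a + k * (y * ∏ p ∈ T, p) := by
  set t := ∏ p ∈ T, p with ht
  have ht0 : 0 < t := prod_pos_of_prime fun p hp => (hT p hp).1
  have hcop : Nat.Coprime y t := by
    refine Nat.Coprime.prod_right fun p hp => ?_
    exact ((Nat.Prime.coprime_iff_not_dvd (hT p hp).1).2 (hT p hp).2).symm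
  by_cases hex : ∃ n₀ : ℕ, (n₀ : ℤ) % (y : ℤ) = b % (y : ℤ) ∧ (t : ℤ) ∣ n₀
  · obtain ⟨n₀, h1, h2⟩ := hex
    refine ⟨n₀ % (y * t), fun n h3 h4 => ⟨n / (y * t), ?_⟩⟩
    have hmod : n₀ % (y * t) = n % (y * t) := by
      refine (Nat.modEq_and_modEq_iff_modEq_mul hcop).1 ⟨?_, ?_⟩
      · have : (n₀ : ℤ) % y = n % y := h1.trans h3.symm
        exact_mod_cast this
      · exact ((Nat.modEq_zero_iff_dvd.2 (Int.natCast_dvd_natCast.1 h2)).trans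
          (Nat.modEq_zero_iff_dvd.2 (Int.natCast_dvd_natCast.1 h4)).symm)
    rw [hmod, mul_comm (n / _)]
    exact (Nat.mod_add_div n (y * t)).symm
  · exact ⟨0, fun n h3 h4 => (hex ⟨n, h3, h4⟩).elim⟩

/-- Twisted averages are controlled by shifted one-sided maximal functions. -/
lemma exists_abs_ramAvg_le {y : ℕ} (hy : 1 ≤ y) (b : ℤ) :
    ∃ a : Finset ℕ → ℕ, ∀ {G : Type} [AddCommGroup G] (Q : Finset ℕ),
      (∀ p ∈ Q, p.Prime ∧ ¬ p ∣ y) → ∀ (N B : ℕ), y * ∏ p ∈ Q, p ≤ N → N ≤ B →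
      ∀ (u : G) (g : G → ℝ) (x : G), |ramAvg y b N Q u g x| ≤ ∑ T ∈ Q.powerset,
        2 * maxAvg B ((y * ∏ p ∈ T, p) • u) (fun z => |g z|) (x - a T • u) := by
  have hex : ∀ T : Finset ℕ, ∃ a : ℕ, (∀ p ∈ T, p.Prime ∧ ¬ p ∣ y) → ∀ n : ℕ,
      (n : ℤ) % (y : ℤ) = b % (y : ℤ) → ((∏ p ∈ T, p : ℕ) : ℤ) ∣ n →
      ∃ k, n = a + k * (y * ∏ p ∈ T, p) := fun T => by
    by_cases hT : ∀ p ∈ T, p.Prime ∧ ¬ p ∣ y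
    · obtain ⟨a, ha⟩ := exists_crt_residue b hT
      exact ⟨a, fun _ => ha⟩
    · exact ⟨0, fun h => (hT h).elim⟩
  choose a ha using hex
  refine ⟨a, fun {G} _ Q hQ N B hN hB u g x => ?_⟩
  have hQp : ∀ p ∈ Q, p.Prime := fun p hp => (hQ p hp).1
  have hq0 : 0 < ∏ p ∈ Q, p := prod_pos_of_prime hQp
  have hN0 : 0 < N := lt_of_lt_of_le (by positivity) hN
  have hNr : (0 : ℝ) < N := by exact_mod_cast hN0
  set P := (Finset.range N).filter (fun n : ℕ => (n : ℤ) % (y : ℤ) = b % (y : ℤ)) with hP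
  have h1 : |ramAvg y b N Q u g x| ≤ (y : ℝ) / N * ∑ n ∈ P, ∑ T ∈ Q.powerset,
      ((∏ p ∈ T, p : ℕ) : ℝ) * (if ((∏ p ∈ T, p : ℕ) : ℤ) ∣ n then 1 else 0) *
        |g (x - n • u)| := by
    unfold ramAvg
    rw [abs_mul, abs_of_nonneg (by positivity : (0 : ℝ) ≤ (y : ℝ) / N)]
    refine mul_le_mul_of_nonneg_left ((Finset.abs_sum_le_sum_abs _ _).trans ?_) (by positivity)
    refine Finset.sum_le_sum fun n _ => ?_
    rw [abs_mul, ← Finset.sum_mul]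
    exact mul_le_mul_of_nonneg_right (abs_ram_le_sum hQp n) (abs_nonneg _)
  refine h1.trans ?_
  rw [Finset.sum_comm, Finset.mul_sum]
  refine Finset.sum_le_sum fun T hT => ?_
  rw [Finset.mem_powerset] at hT
  have hTp : ∀ p ∈ T, p.Prime ∧ ¬ p ∣ y := fun p hp => hQ p (hT hp)
  set t := ∏ p ∈ T, p with ht
  have ht0 : 0 < t := prod_pos_of_prime fun p hp => (hTp p hp).1
  set d := y * t with hd
  have hd0 : 0 < d := by positivity
  have hdN : d ≤ N := by
    refine le_trans (Nat.mul_le_mul_left y ?_) hN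
    exact Finset.prod_le_prod_of_subset_of_one_le' hT fun p hp _ => (hQp p hp).one_le
  set K := N / d with hK
  have hKB : K ≤ B := (Nat.div_le_self _ _).trans hB
  have h2 : ∑ n ∈ P, (t : ℝ) * (if (t : ℤ) ∣ n then 1 else 0) * |g (x - n • u)| ≤
      t * (((K : ℝ) + 1) * stepAvg (d • u) (fun z => |g z|) K (x - a T • u)) := by
    have e1 : ∀ n : ℕ, (t : ℝ) * (if (t : ℤ) ∣ n then 1 else 0) * |g (x - n • u)| =
        t * (if (t : ℤ) ∣ n then |g (x - n • u)| else 0) := fun n => by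
      split_ifs <;> ring
    simp only [e1]
    rw [← Finset.mul_sum, ← Finset.sum_filter]
    refine mul_le_mul_of_nonneg_left ?_ (Nat.cast_nonneg _)
    unfold stepAvg
    rw [mul_div_cancel₀ _ (by positivity)]
    have hsub : P.filter (fun n : ℕ => (t : ℤ) ∣ n) ⊆
        (Finset.range (K + 1)).image (fun k => a T + k * d) := by
      intro n hn
      simp only [hP, Finset.mem_filter, Finset.mem_range] at hn
      obtain ⟨⟨hnN, hnb⟩, hnt⟩ := hn
      obtain ⟨k, hk⟩ := ha T hTp n hnb hnt
      refine Finset.mem_image.2 ⟨k, ?_, hk.symm⟩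
      rw [Finset.mem_range, Nat.lt_succ_iff, hK, Nat.le_div_iff_mul_le hd0]
      have : k * d ≤ n := by rw [hk]; exact Nat.le_add_left _ _
      omega
    refine (Finset.sum_le_sum_of_subset_of_nonneg hsub fun _ _ _ => abs_nonneg _).trans ?_
    rw [Finset.sum_image]
    · refine Finset.sum_le_sum fun k _ => le_of_eq ?_
      congr 2
      rw [add_smul, mul_smul, sub_sub]
    · intro k _ k' _ hkk
      have : k * d = k' * d := by simpa using hkk
      exact Nat.eq_of_mul_eq_mul_right hd0 this
  have hM0 : 0 ≤ maxAvg B (d • u) (fun z => |g z|) (x - a T • u) :=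
    maxAvg_nonneg (fun _ => abs_nonneg _) _
  have h3 := stepAvg_le_maxAvg hKB (d • u) (fun z => |g z|) (x - a T • u)
  have hKd : (K : ℝ) * d ≤ N := by exact_mod_cast Nat.div_mul_le_self N d
  have hdNr : (d : ℝ) ≤ N := by exact_mod_cast hdN
  have hdr : (d : ℝ) = y * t := by rw [hd]; push_cast; rfl
  calc (y : ℝ) / N * ∑ n ∈ P, (t : ℝ) * (if (t : ℤ) ∣ n then 1 else 0) * |g (x - n • u)|
      ≤ (y : ℝ) / N * (t * (((K : ℝ) + 1) *
          maxAvg B (d • u) (fun z => |g z|) (x - a T • u))) := by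
        refine mul_le_mul_of_nonneg_left (h2.trans ?_) (by positivity)
        gcongr
    _ = ((K : ℝ) * d + d) / N * maxAvg B (d • u) (fun z => |g z|) (x - a T • u) := by
        rw [hdr]; field_simp
    _ ≤ 2 * maxAvg B (d • u) (fun z => |g z|) (x - a T • u) := by
        refine mul_le_mul_of_nonneg_right ?_ hM0
        rw [div_le_iff₀ hNr]
        linarith

/-- The sum of `f` over two windows of length `l`. -/
def edgeSum {G : Type*} [AddCommGroup G] (l N : ℕ) (u : G) (f : G → ℝ) (x : G) : ℝ :=
  ∑ k ∈ Finset.range l, f (x - k • u) + ∑ k ∈ Finset.range l, f (x - (N + k) • u)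

lemma sum_edgeSum {G : Type*} [AddCommGroup G] [Fintype G] (l N : ℕ) (u : G) (f : G → ℝ) :
    ∑ x, edgeSum l N u f x = 2 * l * ∑ x, f x := by
  unfold edgeSum
  rw [Finset.sum_add_distrib, Finset.sum_comm, Finset.sum_comm (s := Finset.univ)]
  simp only [sum_sub_right, Finset.sum_const, Finset.card_range, nsmul_eq_mul]
  ring

lemma abs_sum_range_shift_sub_le (h : ℕ → ℝ) (N a : ℕ) :
    |∑ n ∈ Finset.range N, h (n + a) - ∑ n ∈ Finset.range N, h n| ≤
      ∑ k ∈ Finset.range a, |h k| + ∑ k ∈ Finset.range a, |h (N + k)| := by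
  have h1 := Finset.sum_range_add h N a
  have h2 := Finset.sum_range_add h a N
  rw [add_comm a N] at h2
  have h3 : ∑ n ∈ Finset.range N, h (n + a) - ∑ n ∈ Finset.range N, h n =
      -∑ k ∈ Finset.range a, h k + ∑ k ∈ Finset.range a, h (N + k) := by
    simp only [add_comm _ a]
    linarith
  rw [h3]
  refine (abs_add_le _ _).trans (add_le_add ?_ ?_)
  · rw [abs_neg]; exact Finset.abs_sum_le_sum_abs _ _
  · exact Finset.abs_sum_le_sum_abs _ _

/-- A twisted average is almost unchanged when `f` is replaced by its projection. -/
lemma abs_ramAvg_le_proj {G : Type*} [AddCommGroup G] {y : ℕ} (b : ℤ) {Q : Finset ℕ}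
    (hQ : ∀ p ∈ Q, p.Prime ∧ ¬ p ∣ y) (N : ℕ) (u : G) {f : G → ℝ} (hf : ∀ x, 0 ≤ f x) (x : G) :
    |ramAvg y b N Q u f x| ≤ |ramAvg y b N Q u (proj y Q u f) x| +
      (y : ℝ) * ((∏ p ∈ Q, p : ℕ) : ℝ) ^ 2 / N * edgeSum (y * projLen Q) N u f x := by
  have hQp : ∀ p ∈ Q, p.Prime := fun p hp => (hQ p hp).1
  set q := ∏ p ∈ Q, p with hq
  set L := projLen Q with hL
  have hq0 : 0 < q := prod_pos_of_prime hQp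
  have hLr : (0 : ℝ) < L := by exact_mod_cast projLen_pos hQp
  set h : ℕ → ℕ → ℝ := fun m k => if (k : ℤ) % (y : ℤ) = b % (y : ℤ) then
    ram Q ((y : ℤ) * m) * ram Q (k - y * m) * f (x - k • u) else 0 with hh
  have e1 : ramAvg y b N Q u f x =
      ∑ m ∈ Finset.range L, 1 / L * ((y : ℝ) / N * ∑ k ∈ Finset.range N, h m k) := by
    unfold ramAvg
    rw [← Finset.mul_sum, ← Finset.mul_sum, Finset.sum_comm, mul_left_comm (1 / (L : ℝ))]
    refine congrArg (fun t => (y : ℝ) / N * t) ?_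
    rw [Finset.mul_sum, Finset.sum_filter]
    refine Finset.sum_congr rfl fun k _ => ?_
    simp only [hh]
    split_ifs with hk
    · rw [← Finset.sum_mul]
      have hper : Function.Periodic
          (fun m : ℕ => ram Q ((y : ℤ) * m) * ram Q (k - y * m)) q := fun m => by
        have p1 := ram_periodic Q y 0 m
        have p2 := ram_periodic Q (-y) k m
        simp only [add_zero, neg_mul, neg_add_eq_sub] at p1 p2
        simp only [p1, p2, hq]
      have eL : L = q * (64 * q ^ 4) := by rw [hL]; unfold projLen; ring
      have := sum_range_mul_of_periodic hper (64 * q ^ 4)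
      rw [sum_ram_conv hQ, ← eL, ← hq] at this
      rw [this, ← mul_assoc, ← mul_assoc, ← mul_assoc]
      congr 1
      have eLr : (L : ℝ) = q * ((64 * q ^ 4 : ℕ) : ℝ) := by rw [eL]; push_cast; ring
      rw [eLr] at hLr ⊢
      field_simp
    · simp
  have e2 : ramAvg y b N Q u (proj y Q u f) x = ∑ m ∈ Finset.range L,
      1 / L * ((y : ℝ) / N * ∑ k ∈ Finset.range N, h m (k + y * m)) := by
    unfold ramAvg proj
    rw [← Finset.mul_sum, ← Finset.mul_sum, Finset.sum_comm, mul_left_comm (1 / (L : ℝ))]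
    refine congrArg (fun t => (y : ℝ) / N * t) ?_
    rw [Finset.mul_sum, Finset.sum_filter]
    refine Finset.sum_congr rfl fun k _ => ?_
    simp only [hh]
    push_cast
    simp only [Int.add_mul_emod_self_left]
    split_ifs with hk
    · rw [Finset.mul_sum, Finset.mul_sum]
      refine Finset.sum_congr rfl fun m _ => ?_
      rw [add_sub_cancel_right, add_smul, sub_sub]
      ring
    · simp
  have hdiff : |ramAvg y b N Q u f x - ramAvg y b N Q u (proj y Q u f) x| ≤
      (y : ℝ) * (q : ℝ) ^ 2 / N * edgeSum (y * L) N u f x := by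
    rw [e1, e2, ← Finset.sum_sub_distrib]
    refine (Finset.abs_sum_le_sum_abs _ _).trans ?_
    have hb : ∀ m k, |h m k| ≤ (q : ℝ) ^ 2 * f (x - k • u) := fun m k => by
      simp only [hh]
      split_ifs
      · rw [abs_mul, abs_mul, abs_of_nonneg (hf _), sq]
        exact mul_le_mul_of_nonneg_right (mul_le_mul (abs_ram_le hQp _) (abs_ram_le hQp _)
          (abs_nonneg _) (Nat.cast_nonneg _)) (hf _)
      · rw [abs_zero]; exact mul_nonneg (sq_nonneg _) (hf _)
    calc _ ≤ ∑ m ∈ Finset.range L,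
          1 / (L : ℝ) * ((y : ℝ) / N * ((q : ℝ) ^ 2 * edgeSum (y * L) N u f x)) := by
          refine Finset.sum_le_sum fun m hm => ?_
          rw [← mul_sub, ← mul_sub, abs_mul, abs_mul, abs_of_nonneg (by positivity : 0 ≤ 1 / (L:ℝ)),
            abs_of_nonneg (by positivity : 0 ≤ (y : ℝ) / N), abs_sub_comm]
          refine mul_le_mul_of_nonneg_left (mul_le_mul_of_nonneg_left ?_ (by positivity))
            (by positivity)
          refine (abs_sum_range_shift_sub_le (h m) N (y * m)).trans ?_
          unfold edgeSum
          rw [mul_add, Finset.mul_sum, Finset.mul_sum]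
          have hsub : Finset.range (y * m) ⊆ Finset.range (y * L) :=
            Finset.range_subset_range.2 (Nat.mul_le_mul_left _ (Finset.mem_range.1 hm).le)
          refine add_le_add ?_ ?_
          · exact (Finset.sum_le_sum fun k _ => hb m k).trans
              (Finset.sum_le_sum_of_subset_of_nonneg hsub fun _ _ _ =>
                mul_nonneg (sq_nonneg _) (hf _))
          · exact (Finset.sum_le_sum fun k _ => hb m (N + k)).trans
              (Finset.sum_le_sum_of_subset_of_nonneg hsub fun _ _ _ =>
                mul_nonneg (sq_nonneg _) (hf _))
      _ = _ := by
          rw [Finset.sum_const, Finset.card_range, nsmul_eq_mul]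
          field_simp
  have := abs_sub_abs_le_abs_sub (ramAvg y b N Q u f x) (ramAvg y b N Q u (proj y Q u f) x)
  linarith

/-! ### Selberg's majorant of the prime averages -/

/-- The prime-progression average on an abelian group with a marked element `u`. -/
def groupPavg {G : Type*} [AddCommGroup G] (y : ℕ) (b : ℤ) (N : ℕ) (u : G) (f : G → ℝ) (x : G) :
    ℝ :=
  (Nat.totient y : ℝ) / (N : ℝ) *
    ∑ n ∈ (Finset.range N).filter (fun n : ℕ => (n : ℤ) % (y : ℤ) = b % (y : ℤ)),
      ArithmeticFunction.vonMangoldt n * f (x - n • u)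

/-- The sum of `f` along powers of the integers at most `D`. -/
def powerSum {G : Type*} [AddCommGroup G] (D n : ℕ) (u : G) (f : G → ℝ) (x : G) : ℝ :=
  ∑ p ∈ Finset.range (D + 1), ∑ k ∈ Finset.range n, f (x - (p ^ k) • u)

lemma sum_powerSum {G : Type*} [AddCommGroup G] [Fintype G] (D n : ℕ) (u : G) (f : G → ℝ) :
    ∑ x, powerSum D n u f x = (D + 1) * n * ∑ x, f x := by
  unfold powerSum
  rw [Finset.sum_comm]
  simp only [Finset.sum_comm (s := Finset.univ), sum_sub_right, Finset.sum_const,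
    Finset.card_range, nsmul_eq_mul]
  push_cast
  ring

lemma vonMangoldt_le_selberg {y D n N : ℕ} (hD : 1 ≤ D) (hn : n < 2 ^ N) :
    ArithmeticFunction.vonMangoldt n ≤ Real.log ((2 : ℝ) ^ N) *
      ((selF y D n / selG y D) ^ 2 +
        ∑ p ∈ Finset.range (D + 1), ∑ k ∈ Finset.range N, if p ^ k = n then 1 else 0) := by
  have hlog : 0 ≤ Real.log ((2 : ℝ) ^ N) := Real.log_nonneg (one_le_pow₀ one_le_two)
  have hbad : (0 : ℝ) ≤ ∑ p ∈ Finset.range (D + 1), ∑ k ∈ Finset.range N,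
      if p ^ k = n then 1 else 0 :=
    Finset.sum_nonneg fun _ _ => Finset.sum_nonneg fun _ _ => by split_ifs <;> norm_num
  by_cases h0 : ArithmeticFunction.vonMangoldt n = 0
  · rw [h0]
    exact mul_nonneg hlog (add_nonneg (sq_nonneg _) hbad)
  have hpp := ArithmeticFunction.vonMangoldt_ne_zero_iff.1 h0
  have hle : ArithmeticFunction.vonMangoldt n ≤ Real.log ((2 : ℝ) ^ N) := by
    refine ArithmeticFunction.vonMangoldt_le_log.trans (Real.log_le_log ?_ ?_)
    · exact_mod_cast hpp.pos
    · exact_mod_cast hn.le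
  refine hle.trans (le_mul_of_one_le_right hlog ?_)
  obtain ⟨p, k, hp, hk, rfl⟩ := (isPrimePow_nat_iff n).1 hpp
  by_cases hpD : p ≤ D
  · have hkN : k < N :=
      (Nat.pow_lt_pow_iff_right one_lt_two).1 ((Nat.pow_le_pow_left hp.two_le k).trans_lt hn)
    have h1 : (1 : ℝ) ≤ ∑ p' ∈ Finset.range (D + 1), ∑ k' ∈ Finset.range N,
        if p' ^ k' = p ^ k then 1 else 0 := by
      refine le_trans ?_ (Finset.single_le_sum (f := fun p' => ∑ k' ∈ Finset.range N,
        if p' ^ k' = p ^ k then (1 : ℝ) else 0) (fun _ _ => Finset.sum_nonneg fun _ _ => by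
          split_ifs <;> norm_num) (Finset.mem_range.2 (Nat.lt_succ_of_le hpD)))
      refine le_trans ?_ (Finset.single_le_sum (f := fun k' =>
        if p ^ k' = p ^ k then (1 : ℝ) else 0) (fun _ _ => by
          split_ifs <;> norm_num) (Finset.mem_range.2 hkN))
      simp
    linarith [sq_nonneg (selF y D ((p ^ k : ℕ) : ℤ) / selG y D)]
  · rw [selF_eq_selG, div_self (selG_pos y hD).ne']
    · linarith
    · intro p' hp' hp'D hdvd
      have h2 : p' ∣ p ^ k := Int.natCast_dvd_natCast.1 hdvd
      exact hpD (((Nat.prime_dvd_prime_iff_eq hp' hp).1 (hp'.dvd_of_dvd_pow h2)) ▸ hp'D)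

lemma groupPavg_le {G : Type*} [AddCommGroup G] {y D N : ℕ} {c : ℝ} (hy : 1 ≤ y) (hD : 2 ≤ D)
    (hc : Real.log ((2 : ℝ) ^ N) ≤ c * Real.log D) (b : ℤ) (u : G) {f : G → ℝ}
    (hf : ∀ x, 0 ≤ f x) (x : G) :
    groupPavg y b (2 ^ N) u f x ≤
      ∑ Q ∈ adm y (D * D), 2 * c * (8 ^ Q.card / ((∏ p ∈ Q, p : ℕ) : ℝ)) *
        |ramAvg y b (2 ^ N) Q u f x| +
      (y : ℝ) / 2 ^ N * (Real.log ((2 : ℝ) ^ N) * powerSum D N u f x) := by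
  have hD1 : 1 ≤ D := by omega
  have hG := selG_pos y hD1
  have hyr : (0 : ℝ) < y := by exact_mod_cast hy
  have hlogD : 0 < Real.log D := Real.log_pos (by exact_mod_cast hD)
  have hlog : 0 ≤ Real.log ((2 : ℝ) ^ N) := Real.log_nonneg (one_le_pow₀ one_le_two)
  have hφ : (0 : ℝ) ≤ Nat.totient y := Nat.cast_nonneg _
  have hφy : (Nat.totient y : ℝ) ≤ y := by exact_mod_cast Nat.totient_le y
  have hps : 0 ≤ powerSum D N u f x :=
    Finset.sum_nonneg fun _ _ => Finset.sum_nonneg fun _ _ => hf _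
  set P := (Finset.range (2 ^ N)).filter (fun n : ℕ => (n : ℤ) % (y : ℤ) = b % (y : ℤ)) with hP
  have h1 : ∑ n ∈ P, ArithmeticFunction.vonMangoldt n * f (x - n • u) ≤
      Real.log ((2 : ℝ) ^ N) * (∑ n ∈ P, (selF y D n / selG y D) ^ 2 * f (x - n • u)) +
      Real.log ((2 : ℝ) ^ N) * powerSum D N u f x := by
    calc _ ≤ ∑ n ∈ P, (Real.log ((2 : ℝ) ^ N) * ((selF y D n / selG y D) ^ 2 * f (x - n • u)) +
          Real.log ((2 : ℝ) ^ N) * ∑ p ∈ Finset.range (D + 1), ∑ k ∈ Finset.range N,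
            if p ^ k = n then f (x - n • u) else 0) := by
          refine Finset.sum_le_sum fun n hn => ?_
          have := mul_le_mul_of_nonneg_right (vonMangoldt_le_selberg (y := y) hD1
            (Finset.mem_range.1 (Finset.mem_filter.1 hn).1)) (hf (x - n • u))
          refine this.trans (le_of_eq ?_)
          rw [mul_assoc, add_mul, Finset.sum_mul, mul_add]
          simp only [Finset.sum_mul, ite_mul, one_mul, zero_mul]
      _ ≤ _ := by
          rw [Finset.sum_add_distrib, ← Finset.mul_sum, ← Finset.mul_sum]
          refine add_le_add le_rfl (mul_le_mul_of_nonneg_left ?_ hlog)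
          rw [Finset.sum_comm]
          refine Finset.sum_le_sum fun p _ => ?_
          rw [Finset.sum_comm]
          refine Finset.sum_le_sum fun k _ => ?_
          rw [Finset.sum_ite_eq]
          split_ifs
          · exact le_rfl
          · exact hf _
  have h2 : ∑ n ∈ P, (selF y D n / selG y D) ^ 2 * f (x - n • u) =
      1 / selG y D ^ 2 * ∑ Q ∈ adm y (D * D), selCoeff y D Q *
        ∑ n ∈ P, ram Q n * f (x - n • u) := by
    simp only [div_pow, selF_sq, Finset.mul_sum, Finset.sum_div, Finset.sum_mul]
    rw [Finset.sum_comm]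
    refine Finset.sum_congr rfl fun Q _ => Finset.sum_congr rfl fun n _ => ?_
    ring
  have hN : (((2 ^ N : ℕ) : ℝ)) = 2 ^ N := by push_cast; rfl
  have h3 : ∀ Q ∈ adm y (D * D), (Nat.totient y : ℝ) / 2 ^ N * (Real.log ((2 : ℝ) ^ N) *
      (1 / selG y D ^ 2 * (selCoeff y D Q * ∑ n ∈ P, ram Q n * f (x - n • u)))) ≤
      2 * c * (8 ^ Q.card / ((∏ p ∈ Q, p : ℕ) : ℝ)) * |ramAvg y b (2 ^ N) Q u f x| := by
    intro Q hQ
    have hQp : ∀ p ∈ Q, p.Prime := fun p hp => ((mem_adm.1 hQ).1 p hp).1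
    have hq0 : (0 : ℝ) < ((∏ p ∈ Q, p : ℕ) : ℝ) := by exact_mod_cast prod_pos_of_prime hQp
    have hphi := phiS_pos hQp
    have e : (Nat.totient y : ℝ) / 2 ^ N * (Real.log ((2 : ℝ) ^ N) *
      (1 / selG y D ^ 2 * (selCoeff y D Q * ∑ n ∈ P, ram Q n * f (x - n • u)))) =
      ((Nat.totient y : ℝ) / y * Real.log ((2 : ℝ) ^ N) / selG y D ^ 2 * selCoeff y D Q) *
        ramAvg y b (2 ^ N) Q u f x := by
      unfold ramAvg
      rw [hN, ← hP]
      field_simp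
    rw [e]
    refine (le_abs_self _).trans ?_
    rw [abs_mul]
    refine mul_le_mul_of_nonneg_right ?_ (abs_nonneg _)
    rw [abs_mul, abs_of_nonneg (by positivity)]
    have k1 := abs_selCoeff_le y D Q hQp
    have k2 := totient_div_le_selG y D hy hD1
    have k3 := prod_le_two_pow_mul_phiS hQp
    have k4 : (Nat.totient y : ℝ) / y * Real.log ((2 : ℝ) ^ N) / selG y D ≤ 2 * c := by
      rw [div_le_iff₀ hG]
      have hc0 : 0 ≤ c := by
        by_contra hneg
        nlinarith
      calc (Nat.totient y : ℝ) / y * Real.log ((2 : ℝ) ^ N)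
          ≤ (Nat.totient y : ℝ) / y * (c * Real.log D) :=
            mul_le_mul_of_nonneg_left hc (by positivity)
        _ = 2 * c * ((Nat.totient y : ℝ) / y * (Real.log D / 2)) := by ring
        _ ≤ _ := mul_le_mul_of_nonneg_left k2 (by positivity)
    have k5 : (4 : ℝ) ^ Q.card / phiS Q ≤ 8 ^ Q.card / ((∏ p ∈ Q, p : ℕ) : ℝ) := by
      rw [div_le_div_iff₀ hphi hq0]
      have : (8 : ℝ) ^ Q.card = 4 ^ Q.card * 2 ^ Q.card := by rw [← mul_pow]; norm_num
      rw [this, mul_assoc]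
      exact mul_le_mul_of_nonneg_left k3 (by positivity)
    calc _ ≤ (Nat.totient y : ℝ) / y * Real.log ((2 : ℝ) ^ N) / selG y D ^ 2 *
          (4 ^ Q.card / phiS Q * selG y D) := mul_le_mul_of_nonneg_left k1 (by positivity)
      _ = (Nat.totient y : ℝ) / y * Real.log ((2 : ℝ) ^ N) / selG y D *
          (4 ^ Q.card / phiS Q) := by field_simp
      _ ≤ _ := mul_le_mul k4 k5 (by positivity) (le_trans (by positivity) k4)
  unfold groupPavg
  rw [hN]
  calc _ ≤ (Nat.totient y : ℝ) / 2 ^ N * (Real.log ((2 : ℝ) ^ N) * (∑ n ∈ P,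
        (selF y D n / selG y D) ^ 2 * f (x - n • u)) +
        Real.log ((2 : ℝ) ^ N) * powerSum D N u f x) :=
        mul_le_mul_of_nonneg_left h1 (by positivity)
    _ ≤ _ := by
        rw [mul_add]
        refine add_le_add ?_ ?_
        · rw [h2, Finset.mul_sum, Finset.mul_sum, Finset.mul_sum]
          exact Finset.sum_le_sum h3
        · gcongr

/-! ### Summation over the moduli -/

lemma sum_inv_prod_le {s : Finset (Finset ℕ)} {Z : ℕ} (hs : ∀ Q ∈ s, ∀ p ∈ Q, p.Prime)
    (hZ : ∀ Q ∈ s, ∏ p ∈ Q, p ≤ Z) :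
    ∑ Q ∈ s, 1 / ((∏ p ∈ Q, p : ℕ) : ℝ) ≤ 1 + Real.log Z := by
  have hinj : Set.InjOn (fun Q : Finset ℕ => ∏ p ∈ Q, p) s :=
    prod_primes_injOn.mono fun Q hQ => hs Q hQ
  have h1 : ∑ Q ∈ s, 1 / ((∏ p ∈ Q, p : ℕ) : ℝ) =
      ∑ m ∈ s.image (fun Q => ∏ p ∈ Q, p), 1 / (m : ℝ) := by
    rw [Finset.sum_image hinj]
  have hsub : s.image (fun Q => ∏ p ∈ Q, p) ⊆ Finset.Icc 1 Z := by
    intro m hm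
    obtain ⟨Q, hQ, rfl⟩ := Finset.mem_image.1 hm
    exact Finset.mem_Icc.2 ⟨prod_pos_of_prime (hs Q hQ), hZ Q hQ⟩
  rw [h1]
  refine (Finset.sum_le_sum_of_subset_of_nonneg hsub fun _ _ _ => by positivity).trans ?_
  have h2 := harmonic_le_one_add_log Z
  rw [harmonic_eq_sum_Icc] at h2
  push_cast at h2
  simpa only [one_div] using h2

lemma exists_sum_pow_card_div_le {ε : ℝ} (hε : 0 < ε) :
    ∃ C : ℝ, 1 ≤ C ∧ ∀ y Z : ℕ, 1 ≤ Z →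
      ∑ Q ∈ adm y Z, (16 : ℝ) ^ Q.card / ((∏ p ∈ Q, p : ℕ) : ℝ) ≤ C * (Z : ℝ) ^ ε := by
  obtain ⟨C, hC1, hC⟩ := exists_pow_card_le 16 (ε / 2) (by norm_num) (by linarith)
  refine ⟨C * (1 + 2 / ε), ?_, fun y Z hZ => ?_⟩
  · have : 0 < 2 / ε := by positivity
    nlinarith
  have hZr : (1 : ℝ) ≤ Z := by exact_mod_cast hZ
  have hprime : ∀ Q ∈ adm y Z, ∀ p ∈ Q, p.Prime := fun Q hQ p hp => ((mem_adm.1 hQ).1 p hp).1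
  have h1 := sum_inv_prod_le hprime (fun Q hQ => (mem_adm.1 hQ).2)
  have h2 : Real.log Z ≤ (Z : ℝ) ^ (ε / 2) / (ε / 2) :=
    Real.log_le_rpow_div (by linarith) (by linarith)
  have h3 : (1 : ℝ) ≤ (Z : ℝ) ^ (ε / 2) := Real.one_le_rpow hZr (by linarith)
  calc _ ≤ ∑ Q ∈ adm y Z, C * (Z : ℝ) ^ (ε / 2) * (1 / ((∏ p ∈ Q, p : ℕ) : ℝ)) := by
        refine Finset.sum_le_sum fun Q hQ => ?_
        rw [mul_one_div]
        refine div_le_div_of_nonneg_right ((hC Q (hprime Q hQ)).trans ?_) (Nat.cast_nonneg _)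
        have : ((∏ p ∈ Q, p : ℕ) : ℝ) ≤ Z := by exact_mod_cast (mem_adm.1 hQ).2
        gcongr
    _ ≤ C * (Z : ℝ) ^ (ε / 2) * (1 + (Z : ℝ) ^ (ε / 2) / (ε / 2)) := by
        rw [← Finset.mul_sum]
        refine mul_le_mul_of_nonneg_left ?_ (by positivity)
        linarith
    _ ≤ C * (Z : ℝ) ^ (ε / 2) * ((1 + 2 / ε) * (Z : ℝ) ^ (ε / 2)) := by
        refine mul_le_mul_of_nonneg_left ?_ (by positivity)
        have : (Z : ℝ) ^ (ε / 2) / (ε / 2) = 2 / ε * (Z : ℝ) ^ (ε / 2) := by field_simp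
        linarith
    _ = C * (1 + 2 / ε) * ((Z : ℝ) ^ (ε / 2) * (Z : ℝ) ^ (ε / 2)) := by ring
    _ = _ := by rw [← Real.rpow_add (by linarith), add_halves]

lemma exists_block_le : ∃ C : ℝ, 0 < C ∧ ∀ {G : Type} [AddCommGroup G] [Fintype G] (y Y : ℕ),
    1 ≤ Y → ∀ s : Finset (Finset ℕ), (∀ Q ∈ s, ∀ p ∈ Q, p.Prime ∧ ¬ p ∣ y) →
      (∀ Q ∈ s, Y ≤ ∏ p ∈ Q, p ∧ ∏ p ∈ Q, p < 2 * Y) → ∀ (u : G) (f : G → ℝ),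
      ∑ Q ∈ s, (16 : ℝ) ^ Q.card / ((∏ p ∈ Q, p : ℕ) : ℝ) * l2 (proj y Q u f) ≤
        C * (Y : ℝ) ^ (-(1 / 4) : ℝ) * l2 f := by
  obtain ⟨C, hC1, hC⟩ := exists_pow_card_le 16 (1 / 8) (by norm_num) (by norm_num)
  refine ⟨4 * C * (4 * C), by positivity, fun {G} _ _ y Y hY s hs hsY u f => ?_⟩
  have hYr : (1 : ℝ) ≤ Y := by exact_mod_cast hY
  have hY0 : (0 : ℝ) < Y := by linarith
  set X : ℝ := (Y : ℝ) ^ (1 / 8 : ℝ) with hX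
  have hX1 : 1 ≤ X := Real.one_le_rpow hYr (by norm_num)
  have hcardQ : ∀ Q ∈ s, (16 : ℝ) ^ Q.card ≤ 2 * C * X := fun Q hQ => by
    have h1 := hC Q fun p hp => (hs Q hQ p hp).1
    have h2 : ((∏ p ∈ Q, p : ℕ) : ℝ) ≤ 2 * Y := by exact_mod_cast (hsY Q hQ).2.le
    have h3 : ((∏ p ∈ Q, p : ℕ) : ℝ) ^ (1 / 8 : ℝ) ≤ 2 * X := by
      calc _ ≤ (2 * (Y : ℝ)) ^ (1 / 8 : ℝ) := by gcongr
        _ = 2 ^ (1 / 8 : ℝ) * X := Real.mul_rpow (by norm_num) hY0.le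
        _ ≤ 2 * X := by
          refine mul_le_mul_of_nonneg_right ?_ (by positivity)
          calc (2 : ℝ) ^ (1 / 8 : ℝ) ≤ 2 ^ (1 : ℝ) :=
                Real.rpow_le_rpow_of_exponent_le (by norm_num) (by norm_num)
            _ = 2 := Real.rpow_one 2
    nlinarith
  have hcard : (s.card : ℝ) ≤ Y := by
    have h1 : s.card ≤ (Finset.Ico Y (2 * Y)).card := by
      refine Finset.card_le_card_of_injOn (fun Q => ∏ p ∈ Q, p) (fun Q hQ => ?_) ?_
      · simpa using hsY Q hQ
      · exact prod_primes_injOn.mono fun Q hQ p hp => (hs Q hQ p hp).1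
    rw [Nat.card_Ico] at h1
    exact_mod_cast (by omega : s.card ≤ Y)
  have horth := sum_l2_proj_sq_le hY (A := 2 * C * X) hs hsY (by positivity)
    (fun Q hQ => (pow_le_pow_left₀ (by norm_num) (by norm_num) _).trans (hcardQ Q hQ)) u f
  have hsum : ∑ Q ∈ s, l2 (proj y Q u f) ≤ (4 * C * X) * (Y : ℝ) ^ (1 / 2 : ℝ) * l2 f := by
    refine le_of_sq_le_sq ?_ (mul_nonneg (by positivity) (l2_nonneg f))
    calc (∑ Q ∈ s, l2 (proj y Q u f)) ^ 2 ≤ s.card * ∑ Q ∈ s, l2 (proj y Q u f) ^ 2 :=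
          sq_sum_le_card_mul_sum_sq
      _ ≤ Y * ((2 * C * X + 1) * l2 f ^ 2) :=
          mul_le_mul hcard horth (Finset.sum_nonneg fun _ _ => sq_nonneg _) hY0.le
      _ ≤ Y * ((4 * C * X) ^ 2 * l2 f ^ 2) := by
          refine mul_le_mul_of_nonneg_left (mul_le_mul_of_nonneg_right ?_ (sq_nonneg _)) hY0.le
          have : 1 ≤ C * X := one_le_mul_of_one_le_of_one_le hC1 hX1
          nlinarith
      _ = _ := by
          have hsq : ((Y : ℝ) ^ (1 / 2 : ℝ)) ^ 2 = Y := by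
            rw [← Real.rpow_natCast, ← Real.rpow_mul hY0.le]; norm_num
          linear_combination (-(4 * C * X * l2 f) ^ 2) * hsq
  calc _ ≤ ∑ Q ∈ s, 2 * C * X / Y * l2 (proj y Q u f) := by
        refine Finset.sum_le_sum fun Q hQ => mul_le_mul_of_nonneg_right ?_ (l2_nonneg _)
        have : (Y : ℝ) ≤ ((∏ p ∈ Q, p : ℕ) : ℝ) := by exact_mod_cast (hsY Q hQ).1
        exact div_le_div₀ (by positivity) (hcardQ Q hQ) hY0 this
    _ ≤ 2 * C * X / Y * ((4 * C * X) * (Y : ℝ) ^ (1 / 2 : ℝ) * l2 f) := by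
        rw [← Finset.mul_sum]
        exact mul_le_mul_of_nonneg_left hsum (by positivity)
    _ = 2 * C * (4 * C) * ((X * X * (Y : ℝ) ^ (1 / 2 : ℝ)) / Y) * l2 f := by ring
    _ = 2 * C * (4 * C) * (Y : ℝ) ^ (-(1 / 4) : ℝ) * l2 f := by
        have : (X * X * (Y : ℝ) ^ (1 / 2 : ℝ)) / Y = (Y : ℝ) ^ (-(1 / 4) : ℝ) := by
          rw [hX, ← Real.rpow_add hY0, ← Real.rpow_add hY0, ← Real.rpow_sub_one hY0.ne']
          norm_num
        rw [this]
    _ ≤ _ := by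
        refine mul_le_mul_of_nonneg_right (mul_le_mul_of_nonneg_right ?_ (by positivity))
          (l2_nonneg f)
        nlinarith

lemma exists_high_le : ∃ C : ℝ, 0 < C ∧ ∀ {G : Type} [AddCommGroup G] [Fintype G] (y J : ℕ)
    (s : Finset (Finset ℕ)), (∀ Q ∈ s, ∀ p ∈ Q, p.Prime ∧ ¬ p ∣ y) →
      (∀ Q ∈ s, 2 ^ J ≤ ∏ p ∈ Q, p) → ∀ (u : G) (f : G → ℝ),
      ∑ Q ∈ s, (16 : ℝ) ^ Q.card / ((∏ p ∈ Q, p : ℕ) : ℝ) * l2 (proj y Q u f) ≤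
        C * ((2 : ℝ) ^ (-(1 / 4) : ℝ)) ^ J * l2 f := by
  obtain ⟨C, hC0, hC⟩ := exists_block_le
  set r : ℝ := (2 : ℝ) ^ (-(1 / 4) : ℝ) with hr
  have hr0 : 0 < r := by positivity
  have hr1 : r < 1 := Real.rpow_lt_one_of_one_lt_of_neg (by norm_num) (by norm_num)
  have hr1' : 0 < 1 - r := by linarith
  refine ⟨C * (1 / (1 - r)), by positivity, fun {G} _ _ y J s hs hsJ u f => ?_⟩
  set v : Finset ℕ → ℝ := fun Q =>
    (16 : ℝ) ^ Q.card / ((∏ p ∈ Q, p : ℕ) : ℝ) * l2 (proj y Q u f) with hv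
  obtain ⟨M, hM⟩ : ∃ M, ∀ Q ∈ s, Nat.log 2 (∏ p ∈ Q, p) < J + M := by
    refine ⟨∑ Q ∈ s, Nat.log 2 (∏ p ∈ Q, p) + 1, fun Q hQ => ?_⟩
    have := Finset.single_le_sum (f := fun Q => Nat.log 2 (∏ p ∈ Q, p))
      (fun _ _ => Nat.zero_le _) hQ
    exact Nat.lt_of_lt_of_le (Nat.lt_succ_of_le this) (Nat.le_add_left _ _)
  have hmaps : ∀ Q ∈ s, Nat.log 2 (∏ p ∈ Q, p) ∈ Finset.Ico J (J + M) := fun Q hQ => by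
    refine Finset.mem_Ico.2 ⟨?_, hM Q hQ⟩
    exact Nat.le_log_of_pow_le (by norm_num) (hsJ Q hQ)
  calc ∑ Q ∈ s, v Q = ∑ j ∈ Finset.Ico J (J + M),
        ∑ Q ∈ s.filter (fun Q => Nat.log 2 (∏ p ∈ Q, p) = j), v Q :=
        (Finset.sum_fiberwise_of_maps_to hmaps v).symm
    _ ≤ ∑ j ∈ Finset.Ico J (J + M), C * r ^ j * l2 f := by
        refine Finset.sum_le_sum fun j _ => ?_
        have := hC y (2 ^ j) Nat.one_le_two_pow
          (s.filter (fun Q => Nat.log 2 (∏ p ∈ Q, p) = j))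
          (fun Q hQ => hs Q (Finset.mem_filter.1 hQ).1) (fun Q hQ => by
            obtain ⟨h1, h2⟩ := Finset.mem_filter.1 hQ
            have hne := (prod_pos_of_prime fun p hp => (hs Q h1 p hp).1).ne'
            have h3 := (Nat.log_eq_iff (Or.inr ⟨one_lt_two, hne⟩)).1 h2
            rw [pow_succ, mul_comm] at h3
            exact h3) u f
        refine this.trans (le_of_eq ?_)
        congr 2
        rw [hr, ← Real.rpow_natCast ((2 : ℝ) ^ (-(1 / 4) : ℝ)), ← Real.rpow_mul (by norm_num),
          mul_comm, Real.rpow_mul (by norm_num)]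
        norm_num
    _ ≤ C * (1 / (1 - r)) * r ^ J * l2 f := by
        rw [← Finset.sum_mul, ← Finset.mul_sum]
        refine mul_le_mul_of_nonneg_right ?_ (l2_nonneg f)
        rw [mul_assoc]
        refine mul_le_mul_of_nonneg_left ?_ hC0.le
        rw [Finset.sum_Ico_eq_sum_range, add_tsub_cancel_left]
        simp only [pow_add]
        rw [← Finset.mul_sum, mul_comm]
        refine mul_le_mul_of_nonneg_right ?_ (by positivity)
        rw [geom_sum_eq hr1.ne, ← neg_div_neg_eq, neg_sub, neg_sub]
        refine div_le_div_of_nonneg_right ?_ hr1'.le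
        linarith [pow_pos hr0 M]

/-! ### Adding functions of weak type -/

lemma le_sum_dyadic {g : ℝ} (hg : g ≤ 1) (K : ℕ) (hK : (1 / 2 : ℝ) ^ K < g) :
    g ≤ ∑ j ∈ Finset.range K, if (1 / 2 : ℝ) ^ (j + 1) < g then (1 / 2 : ℝ) ^ j else 0 := by
  induction K with
  | zero => simp at hK; linarith
  | succ K ih =>
    rw [Finset.sum_range_succ, if_pos hK]
    by_cases h : (1 / 2 : ℝ) ^ K < g
    · have : (0 : ℝ) < (1 / 2) ^ K := by positivity
      linarith [ih h]
    · have : (0 : ℝ) ≤ ∑ j ∈ Finset.range K,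
          if (1 / 2 : ℝ) ^ (j + 1) < g then (1 / 2 : ℝ) ^ j else 0 :=
        Finset.sum_nonneg fun j _ => by split_ifs <;> positivity
      linarith [not_lt.1 h]

lemma card_sum_gt_le {X ι : Type*} [Fintype X] {s : Finset ι} {c : ι → ℝ} {g : ι → X → ℝ}
    {A t : ℝ} (hc : ∀ i ∈ s, 0 ≤ c i) (hg1 : ∀ i ∈ s, ∀ x, g i x ≤ 1)
    (hweak : ∀ i ∈ s, ∀ τ : ℝ, 0 < τ →
      ((Finset.univ.filter (fun x => τ < g i x)).card : ℝ) ≤ A / τ)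
    (ht : 0 < t) (K : ℕ) (hK : 2 * ∑ i ∈ s, c i ≤ t * 2 ^ K) :
    ((Finset.univ.filter (fun x => t < ∑ i ∈ s, c i * g i x)).card : ℝ) ≤
      4 * (∑ i ∈ s, c i) * K * A / t := by
  set E := Finset.univ.filter (fun x => t < ∑ i ∈ s, c i * g i x) with hE
  set ψ : ι → X → ℝ := fun i x =>
    ∑ j ∈ Finset.range K, if (1 / 2 : ℝ) ^ (j + 1) < g i x then (1 / 2 : ℝ) ^ j else 0 with hψ
  have hψ0 : ∀ i x, 0 ≤ ψ i x := fun i x =>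
    Finset.sum_nonneg fun j _ => by split_ifs <;> positivity
  have hgψ : ∀ i ∈ s, ∀ x, g i x ≤ (1 / 2) ^ K + ψ i x := fun i hi x => by
    by_cases h : (1 / 2 : ℝ) ^ K < g i x
    · have := le_sum_dyadic (hg1 i hi x) K h
      have h2 : (0 : ℝ) < (1 / 2) ^ K := by positivity
      simp only [hψ]
      linarith
    · linarith [not_lt.1 h, hψ0 i x]
  have hψsum : ∀ i ∈ s, ∑ x, ψ i x ≤ 2 * K * A := fun i hi => by
    simp only [hψ]
    rw [Finset.sum_comm]
    calc _ ≤ ∑ j ∈ Finset.range K, 2 * A := Finset.sum_le_sum fun j _ => by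
          rw [← Finset.sum_filter, Finset.sum_const, nsmul_eq_mul]
          have := hweak i hi ((1 / 2) ^ (j + 1)) (by positivity)
          calc _ ≤ A / (1 / 2) ^ (j + 1) * (1 / 2) ^ j :=
                mul_le_mul_of_nonneg_right this (by positivity)
            _ = 2 * A := by rw [pow_succ]; field_simp
      _ = _ := by rw [Finset.sum_const, Finset.card_range, nsmul_eq_mul]; ring
  have hhalf : (∑ i ∈ s, c i) * (1 / 2) ^ K ≤ t / 2 := by
    rw [one_div, inv_pow, ← div_eq_mul_inv, div_le_iff₀ (by positivity)]
    linarith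
  have h1 : ∀ x ∈ E, t / 2 ≤ ∑ i ∈ s, c i * ψ i x := fun x hx => by
    have h2 : t < ∑ i ∈ s, c i * g i x := (Finset.mem_filter.1 hx).2
    have h3 : ∑ i ∈ s, c i * g i x ≤ ∑ i ∈ s, c i * ((1 / 2) ^ K + ψ i x) :=
      Finset.sum_le_sum fun i hi => mul_le_mul_of_nonneg_left (hgψ i hi x) (hc i hi)
    simp only [mul_add, Finset.sum_add_distrib] at h3
    rw [← Finset.sum_mul] at h3
    linarith
  have h4 : E.card * (t / 2) ≤ (∑ i ∈ s, c i) * (2 * K * A) := by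
    calc _ = ∑ x ∈ E, t / 2 := by rw [Finset.sum_const, nsmul_eq_mul]
      _ ≤ ∑ x ∈ E, ∑ i ∈ s, c i * ψ i x := Finset.sum_le_sum h1
      _ ≤ ∑ x, ∑ i ∈ s, c i * ψ i x :=
          Finset.sum_le_sum_of_subset_of_nonneg (Finset.subset_univ _) fun x _ _ =>
            Finset.sum_nonneg fun i hi => mul_nonneg (hc i hi) (hψ0 i x)
      _ = ∑ i ∈ s, c i * ∑ x, ψ i x := by
          rw [Finset.sum_comm]
          simp only [Finset.mul_sum]
      _ ≤ ∑ i ∈ s, c i * (2 * K * A) :=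
          Finset.sum_le_sum fun i hi => mul_le_mul_of_nonneg_left (hψsum i hi) (hc i hi)
      _ = _ := by rw [Finset.sum_mul]
  rw [le_div_iff₀ ht]
  linarith

lemma card_gt_le_sum_div {X : Type*} [Fintype X] {g : X → ℝ} (hg : ∀ x, 0 ≤ g x) {t : ℝ}
    (ht : 0 < t) :
    ((Finset.univ.filter (fun x => t < g x)).card : ℝ) ≤ (∑ x, g x) / t := by
  rw [le_div_iff₀ ht, ← nsmul_eq_mul, ← Finset.sum_const]
  exact (Finset.sum_le_sum fun x hx => (Finset.mem_filter.1 hx).2.le).trans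
    (Finset.sum_le_sum_of_subset_of_nonneg (Finset.subset_univ _) fun x _ _ => hg x)

lemma card_gt_le_l2_div {X : Type*} [Fintype X] (g : X → ℝ) {t : ℝ} (ht : 0 < t) :
    ((Finset.univ.filter (fun x => t < g x)).card : ℝ) ≤ l2 g ^ 2 / t ^ 2 := by
  rw [le_div_iff₀ (by positivity), ← nsmul_eq_mul, ← Finset.sum_const, l2_sq]
  exact (Finset.sum_le_sum fun x hx =>
    pow_le_pow_left₀ ht.le (Finset.mem_filter.1 hx).2.le 2).trans
    (Finset.sum_le_sum_of_subset_of_nonneg (Finset.subset_univ _) fun x _ _ => sq_nonneg _)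

/-! ### Splitting the majorant by the size of the modulus -/

/-- The sifting level used for averages of length `2 ^ n`. -/
def level (n : ℕ) : ℕ := 2 ^ (n / 40)

/-- The shifted maximal functions dominating the average twisted by the Ramanujan sum of `Q`. -/
def modMax {G : Type*} [AddCommGroup G] (y B : ℕ) (a : Finset ℕ → ℕ) (Q : Finset ℕ) (u : G)
    (g : G → ℝ) (x : G) : ℝ :=
  ∑ T ∈ Q.powerset, 2 * maxAvg B ((y * ∏ p ∈ T, p) • u) (fun z => |g z|) (x - a T • u)

/-- The weight of the Ramanujan sum of `Q` in Selberg's majorant. -/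
def modWeight (Q : Finset ℕ) : ℝ := 160 * (8 ^ Q.card / ((∏ p ∈ Q, p : ℕ) : ℝ))

/-- The contribution of the moduli at most `Z`. -/
def lowPart {G : Type*} [AddCommGroup G] (y B : ℕ) (a : Finset ℕ → ℕ) (Z : ℕ) (u : G)
    (f : G → ℝ) (x : G) : ℝ :=
  ∑ Q ∈ adm y Z, modWeight Q * modMax y B a Q u f x

/-- The contribution of the moduli between `Z` and `W`. -/
def highPart {G : Type*} [AddCommGroup G] (y B : ℕ) (a : Finset ℕ → ℕ) (Z W : ℕ) (u : G)
    (f : G → ℝ) (x : G) : ℝ :=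
  ∑ Q ∈ (adm y W).filter (fun Q => Z ≤ ∏ p ∈ Q, p),
    modWeight Q * modMax y B a Q u (proj y Q u f) x

/-- The error terms for averages of length `2 ^ n`. -/
def errPart {G : Type*} [AddCommGroup G] (y n : ℕ) (u : G) (f : G → ℝ) (x : G) : ℝ :=
  ∑ Q ∈ adm y (level n * level n), modWeight Q *
    ((y : ℝ) * ((∏ p ∈ Q, p : ℕ) : ℝ) ^ 2 / 2 ^ n * edgeSum (y * projLen Q) (2 ^ n) u f x) +
  (y : ℝ) / 2 ^ n * (Real.log ((2 : ℝ) ^ n) * powerSum (level n) n u f x)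

lemma modWeight_nonneg (Q : Finset ℕ) : 0 ≤ modWeight Q := by
  unfold modWeight
  positivity

lemma modMax_nonneg {G : Type*} [AddCommGroup G] (y B : ℕ) (a : Finset ℕ → ℕ) (Q : Finset ℕ)
    (u : G) (g : G → ℝ) (x : G) : 0 ≤ modMax y B a Q u g x :=
  Finset.sum_nonneg fun _ _ => mul_nonneg zero_le_two (maxAvg_nonneg (fun _ => abs_nonneg _) _)

lemma errPart_nonneg {G : Type*} [AddCommGroup G] (y n : ℕ) (u : G) {f : G → ℝ}
    (hf : ∀ x, 0 ≤ f x) (x : G) : 0 ≤ errPart y n u f x := by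
  have hlog : 0 ≤ Real.log ((2 : ℝ) ^ n) := Real.log_nonneg (one_le_pow₀ one_le_two)
  refine add_nonneg (Finset.sum_nonneg fun Q _ => mul_nonneg (modWeight_nonneg Q)
    (mul_nonneg (by positivity) (add_nonneg (Finset.sum_nonneg fun _ _ => hf _)
      (Finset.sum_nonneg fun _ _ => hf _)))) (mul_nonneg (by positivity) (mul_nonneg hlog
      (Finset.sum_nonneg fun _ _ => Finset.sum_nonneg fun _ _ => hf _)))

/-- The pointwise domination of the prime averages. -/
lemma exists_groupPavg_le {y : ℕ} (hy : 1 ≤ y) (b : ℤ) :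
    ∃ a : Finset ℕ → ℕ, ∀ {G : Type} [AddCommGroup G] (n m Z : ℕ), 40 ≤ n → 2 * y ≤ n → n ≤ m →
      ∀ (u : G) (f : G → ℝ), (∀ x, 0 ≤ f x) → ∀ x, groupPavg y b (2 ^ n) u f x ≤
        lowPart y (2 ^ m) a Z u f x + highPart y (2 ^ m) a Z (level m * level m) u f x +
          errPart y n u f x := by
  obtain ⟨a, ha⟩ := exists_abs_ramAvg_le hy b
  refine ⟨a, fun {G} _ n m Z hn hyn hnm u f hf x => ?_⟩
  have hD2 : 2 ≤ level n := by
    unfold level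
    calc 2 = 2 ^ 1 := rfl
      _ ≤ 2 ^ (n / 40) := Nat.pow_le_pow_right (by norm_num) (by omega)
  have hlogc : Real.log ((2 : ℝ) ^ n) ≤ 80 * Real.log (level n) := by
    unfold level
    push_cast
    rw [Real.log_pow, Real.log_pow, ← mul_assoc]
    refine mul_le_mul_of_nonneg_right ?_ (Real.log_nonneg one_le_two)
    exact_mod_cast (by omega : n ≤ 80 * (n / 40))
  have hyD : y * (level n * level n) ≤ 2 ^ n := by
    unfold level
    rw [← pow_add]
    calc _ ≤ 2 ^ y * 2 ^ (n / 40 + n / 40) :=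
          Nat.mul_le_mul_right _ Nat.lt_two_pow_self.le
      _ = 2 ^ (y + (n / 40 + n / 40)) := by rw [← pow_add]
      _ ≤ 2 ^ n := Nat.pow_le_pow_right (by norm_num) (by omega)
  have hB : 2 ^ n ≤ 2 ^ m := Nat.pow_le_pow_right (by norm_num) hnm
  have hlevel : level n * level n ≤ level m * level m := by
    have : level n ≤ level m := Nat.pow_le_pow_right (by norm_num) (Nat.div_le_div_right hnm)
    exact Nat.mul_le_mul this this
  refine (groupPavg_le hy hD2 hlogc b u hf x).trans ?_
  unfold errPart
  rw [← add_assoc]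
  refine add_le_add ?_ le_rfl
  have hterm : ∀ Q ∈ adm y (level n * level n),
      2 * 80 * (8 ^ Q.card / ((∏ p ∈ Q, p : ℕ) : ℝ)) * |ramAvg y b (2 ^ n) Q u f x| ≤
      (if ∏ p ∈ Q, p ≤ Z then modWeight Q * modMax y (2 ^ m) a Q u f x else 0) +
      (if Z ≤ ∏ p ∈ Q, p then modWeight Q * modMax y (2 ^ m) a Q u (proj y Q u f) x else 0) +
      modWeight Q * ((y : ℝ) * ((∏ p ∈ Q, p : ℕ) : ℝ) ^ 2 / 2 ^ n *
        edgeSum (y * projLen Q) (2 ^ n) u f x) := by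
    intro Q hQ
    obtain ⟨hQp, hQD⟩ := mem_adm.1 hQ
    have hN : y * ∏ p ∈ Q, p ≤ 2 ^ n := (Nat.mul_le_mul_left y hQD).trans hyD
    have hw := modWeight_nonneg Q
    have e : 2 * 80 * (8 ^ Q.card / ((∏ p ∈ Q, p : ℕ) : ℝ)) = modWeight Q := by
      unfold modWeight; norm_num
    rw [e]
    have hm1 := mul_nonneg hw (modMax_nonneg y (2 ^ m) a Q u f x)
    have hm2 := mul_nonneg hw (modMax_nonneg y (2 ^ m) a Q u (proj y Q u f) x)
    have hedge : 0 ≤ modWeight Q * ((y : ℝ) * ((∏ p ∈ Q, p : ℕ) : ℝ) ^ 2 / 2 ^ n *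
        edgeSum (y * projLen Q) (2 ^ n) u f x) :=
      mul_nonneg hw (mul_nonneg (by positivity) (add_nonneg (Finset.sum_nonneg fun _ _ => hf _)
      (Finset.sum_nonneg fun _ _ => hf _)))
    rcases le_total (∏ p ∈ Q, p) Z with h | h
    · rw [if_pos h]
      have h1 := mul_le_mul_of_nonneg_left (ha Q hQp (2 ^ n) (2 ^ m) hN hB u f x) hw
      have h2 : 0 ≤ if Z ≤ ∏ p ∈ Q, p then
          modWeight Q * modMax y (2 ^ m) a Q u (proj y Q u f) x else 0 := by
        split_ifs <;> first | exact hm2 | exact le_rfl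
      unfold modMax at *
      linarith
    · rw [if_pos h]
      have h1 := mul_le_mul_of_nonneg_left (abs_ramAvg_le_proj b hQp (2 ^ n) u hf x) hw
      have h3 := mul_le_mul_of_nonneg_left
        (ha Q hQp (2 ^ n) (2 ^ m) hN hB u (proj y Q u f) x) hw
      have h2 : 0 ≤ if ∏ p ∈ Q, p ≤ Z then modWeight Q * modMax y (2 ^ m) a Q u f x else 0 := by
        split_ifs <;> first | exact hm1 | exact le_rfl
      rw [Nat.cast_pow, Nat.cast_ofNat, mul_add] at h1
      unfold modMax at *
      linarith
  refine (Finset.sum_le_sum hterm).trans ?_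
  rw [Finset.sum_add_distrib, Finset.sum_add_distrib, ← Finset.sum_filter, ← Finset.sum_filter]
  refine add_le_add (add_le_add ?_ ?_) le_rfl
  · refine Finset.sum_le_sum_of_subset_of_nonneg (fun Q hQ => ?_) fun Q _ _ =>
      mul_nonneg (modWeight_nonneg Q) (modMax_nonneg y (2 ^ m) a Q u f x)
    obtain ⟨h1, h2⟩ := Finset.mem_filter.1 hQ
    exact mem_adm.2 ⟨(mem_adm.1 h1).1, h2⟩
  · refine Finset.sum_le_sum_of_subset_of_nonneg
      (Finset.filter_subset_filter _ (adm_mono hlevel)) fun Q _ _ =>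
      mul_nonneg (modWeight_nonneg Q) (modMax_nonneg y (2 ^ m) a Q u (proj y Q u f) x)

lemma card_filter_sub {G : Type*} [AddCommGroup G] [Fintype G] (P : G → Prop) (a : G) :
    (Finset.univ.filter (fun x => P (x - a))).card = (Finset.univ.filter P).card :=
  Finset.card_equiv (Equiv.subRight a) fun x => by simp

lemma exists_card_lowPart_gt_le {s : ℝ} (hs0 : 0 < s) (hs2 : s ≤ 2) :
    ∃ C : ℝ, 0 < C ∧ ∀ {G : Type} [AddCommGroup G] [Fintype G] (y B J : ℕ) (a : Finset ℕ → ℕ)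
      (u : G) (f : G → ℝ), (∀ x, 0 ≤ f x) → (∀ x, f x ≤ 1) → ∀ t : ℝ, 0 < t → t ≤ 1 →
      (2 : ℝ) ^ J ≤ 2 * t ^ (-2 : ℝ) →
      ((Finset.univ.filter (fun x => t / 3 < lowPart y B a (2 ^ J) u f x)).card : ℝ) ≤
        C * t ^ (-1 - s) * ∑ x, f x := by
  obtain ⟨C, hC1, hC⟩ := exists_sum_pow_card_div_le (ε := s / 8) (by linarith)
  set C₂ : ℝ := 4 * (1920 * C) with hC₂
  have hC₂0 : 0 < C₂ := by positivity
  refine ⟨4 / s * C₂ ^ (1 + s / 2), by positivity,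
    fun {G} _ _ y B J a u f hf0 hf1 t ht0 ht1 hJ => ?_⟩
  have hsum0 : 0 ≤ ∑ x, f x := Finset.sum_nonneg fun x _ => hf0 x
  have hfabs : (fun z => |f z|) = f := funext fun z => abs_of_nonneg (hf0 z)
  set I := (adm y (2 ^ J)).sigma (fun Q => Q.powerset) with hI
  set c : (Σ _ : Finset ℕ, Finset ℕ) → ℝ := fun i => modWeight i.1 * 2 with hc
  set g : (Σ _ : Finset ℕ, Finset ℕ) → G → ℝ := fun i x =>
    maxAvg B ((y * ∏ p ∈ i.2, p) • u) f (x - a i.2 • u) with hg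
  have hlow : ∀ x, lowPart y B a (2 ^ J) u f x = ∑ i ∈ I, c i * g i x := fun x => by
    unfold lowPart modMax
    rw [hI, Finset.sum_sigma]
    simp only [hc, hg, hfabs, Finset.mul_sum, mul_assoc]
  set cb : ℝ := 320 * (C * ((2 : ℝ) ^ J) ^ (s / 8)) with hcb
  have hcsum : ∑ i ∈ I, c i ≤ cb := by
    rw [hI, Finset.sum_sigma]
    simp only [hc, Finset.sum_const, Finset.card_powerset, nsmul_eq_mul]
    have := hC y (2 ^ J) Nat.one_le_two_pow
    push_cast at this
    calc _ = 320 * ∑ Q ∈ adm y (2 ^ J), (16 : ℝ) ^ Q.card / ∏ p ∈ Q, (p : ℝ) := by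
          rw [Finset.mul_sum]
          refine Finset.sum_congr rfl fun Q _ => ?_
          unfold modWeight
          have : (16 : ℝ) ^ Q.card = 2 ^ Q.card * 8 ^ Q.card := by rw [← mul_pow]; norm_num
          rw [this]
          push_cast
          ring
      _ ≤ cb := mul_le_mul_of_nonneg_left this (by norm_num)
  have h2J1 : (1 : ℝ) ≤ ((2 : ℝ) ^ J) ^ (s / 8) :=
    Real.one_le_rpow (one_le_pow₀ one_le_two) (by linarith)
  have hcb0 : 0 < cb := by positivity
  set X : ℝ := 6 * cb / t with hX
  have hX0 : 0 < X := by positivity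
  have hX1 : 1 ≤ X := by
    rw [hX, le_div_iff₀ ht0, hcb]
    nlinarith
  obtain ⟨k, hk1, hk2⟩ := exists_nat_pow_near hX1 (one_lt_two (α := ℝ))
  have hK : 2 * ∑ i ∈ I, c i ≤ t / 3 * 2 ^ (k + 1) := by
    have : 6 * cb < 2 ^ (k + 1) * t := by rwa [hX, div_lt_iff₀ ht0] at hk2
    linarith
  have hcount := card_sum_gt_le (s := I) (c := c) (g := g) (A := ∑ x, f x) (t := t / 3)
    (fun i _ => mul_nonneg (modWeight_nonneg _) zero_le_two)
    (fun i _ x => maxAvg_le_one hf1 _)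
    (fun i _ τ hτ => by
      rw [card_filter_sub (fun x => τ < maxAvg B ((y * ∏ p ∈ i.2, p) • u) f x) (a i.2 • u)]
      exact card_maxAvg_gt_le B _ hf0 hτ) (by positivity) (k + 1) hK
  have hk : ((k + 1 : ℕ) : ℝ) ≤ 4 / s * (2 * X) ^ (s / 2) := by
    have h1 : Real.log ((2 : ℝ) ^ (k + 1)) ≤ Real.log (2 * X) :=
      Real.log_le_log (by positivity) (by rw [pow_succ]; linarith)
    rw [Real.log_pow] at h1
    have h2 : Real.log (2 * X) ≤ (2 * X) ^ (s / 2) / (s / 2) :=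
      Real.log_le_rpow_div (by positivity) (by linarith)
    have h3 := Real.log_two_gt_d9
    have h4 : (0 : ℝ) ≤ ((k + 1 : ℕ) : ℝ) := Nat.cast_nonneg _
    have h5 : 4 / s * (2 * X) ^ (s / 2) = 2 * ((2 * X) ^ (s / 2) / (s / 2)) := by
      field_simp; norm_num
    rw [h5]
    nlinarith
  have hXt : 2 * X ≤ C₂ * t ^ (-1 - s / 4) := by
    have h1 : ((2 : ℝ) ^ J) ^ (s / 8) ≤ 2 * t ^ (-(s / 4)) := by
      calc _ ≤ (2 * t ^ (-2 : ℝ)) ^ (s / 8) := by gcongr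
        _ = 2 ^ (s / 8) * t ^ (-(s / 4)) := by
          rw [Real.mul_rpow (by norm_num) (by positivity), ← Real.rpow_mul ht0.le]
          congr 2
          ring
        _ ≤ _ := by
          refine mul_le_mul_of_nonneg_right ?_ (by positivity)
          calc (2 : ℝ) ^ (s / 8) ≤ 2 ^ (1 : ℝ) :=
                Real.rpow_le_rpow_of_exponent_le (by norm_num) (by linarith)
            _ = 2 := Real.rpow_one 2
    have h2 : t ^ (-1 - s / 4) = t ^ (-(s / 4)) / t := by
      rw [← Real.rpow_sub_one ht0.ne']; congr 1; ring
    rw [h2, hX, hcb, hC₂, ← mul_div_assoc, ← mul_div_assoc]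
    refine div_le_div_of_nonneg_right ?_ ht0.le
    nlinarith
  have hfin : (2 * X) ^ (1 + s / 2) ≤ C₂ ^ (1 + s / 2) * t ^ (-1 - s) := by
    calc _ ≤ (C₂ * t ^ (-1 - s / 4)) ^ (1 + s / 2) := by gcongr
      _ = C₂ ^ (1 + s / 2) * t ^ ((-1 - s / 4) * (1 + s / 2)) := by
        rw [Real.mul_rpow hC₂0.le (by positivity), ← Real.rpow_mul ht0.le]
      _ ≤ _ := by
        refine mul_le_mul_of_nonneg_left ?_ (by positivity)
        refine Real.rpow_le_rpow_of_exponent_ge ht0 ht1 ?_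
        nlinarith
  simp only [hlow]
  refine hcount.trans ?_
  calc 4 * (∑ i ∈ I, c i) * ((k + 1 : ℕ) : ℝ) * (∑ x, f x) / (t / 3)
      ≤ 4 * cb * ((k + 1 : ℕ) : ℝ) * (∑ x, f x) / (t / 3) := by gcongr
    _ = 2 * X * ((k + 1 : ℕ) : ℝ) * ∑ x, f x := by rw [hX]; field_simp; ring
    _ ≤ 2 * X * (4 / s * (2 * X) ^ (s / 2)) * ∑ x, f x := by gcongr
    _ = 4 / s * (2 * X) ^ (1 + s / 2) * ∑ x, f x := by
        rw [Real.rpow_add (by positivity), Real.rpow_one]; ring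
    _ ≤ 4 / s * (C₂ ^ (1 + s / 2) * t ^ (-1 - s)) * ∑ x, f x := by gcongr
    _ = _ := by ring

lemma exists_card_highPart_gt_le :
    ∃ C : ℝ, 0 < C ∧ ∀ {G : Type} [AddCommGroup G] [Fintype G] (y B J W : ℕ)
      (a : Finset ℕ → ℕ) (u : G) (f : G → ℝ), (∀ x, 0 ≤ f x) → (∀ x, f x ≤ 1) →
      ∀ t : ℝ, 0 < t → t ^ (-2 : ℝ) ≤ (2 : ℝ) ^ J →
      ((Finset.univ.filter (fun x => t / 3 < highPart y B a (2 ^ J) W u f x)).card : ℝ) ≤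
        C * t⁻¹ * ∑ x, f x := by
  obtain ⟨C, hC0, hC⟩ := exists_high_le
  refine ⟨9 * (640 * C) ^ 2, by positivity, fun {G} _ _ y B J W a u f hf0 hf1 t ht0 hJ => ?_⟩
  set S := (adm y W).filter (fun Q => 2 ^ J ≤ ∏ p ∈ Q, p) with hS
  have h1 := hC y J S (fun Q hQ => (mem_adm.1 (Finset.mem_filter.1 hQ).1).1)
    (fun Q hQ => (Finset.mem_filter.1 hQ).2) u f
  have hl2 : l2 (highPart y B a (2 ^ J) W u f) ≤
      640 * (C * ((2 : ℝ) ^ (-(1 / 4) : ℝ)) ^ J * l2 f) := by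
    calc l2 (highPart y B a (2 ^ J) W u f)
        ≤ ∑ Q ∈ S, l2 (fun x => modWeight Q * modMax y B a Q u (proj y Q u f) x) := l2_sum_le _ _
      _ ≤ ∑ Q ∈ S, 640 * ((16 : ℝ) ^ Q.card / ((∏ p ∈ Q, p : ℕ) : ℝ) * l2 (proj y Q u f)) := by
          refine Finset.sum_le_sum fun Q _ => ?_
          rw [l2_const_mul, abs_of_nonneg (modWeight_nonneg Q)]
          have h2 : l2 (modMax y B a Q u (proj y Q u f)) ≤
              2 ^ Q.card * (4 * l2 (proj y Q u f)) := by
            refine (l2_sum_le _ _).trans ?_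
            calc _ ≤ ∑ T ∈ Q.powerset, 4 * l2 (proj y Q u f) := by
                  refine Finset.sum_le_sum fun T _ => ?_
                  rw [l2_const_mul, l2_sub_right, abs_of_nonneg zero_le_two]
                  have := l2_maxAvg_le B ((y * ∏ p ∈ T, p) • u)
                    (f := fun z => |proj y Q u f z|) (fun _ => abs_nonneg _)
                  rw [l2_abs] at this
                  linarith
              _ = _ := by rw [Finset.sum_const, Finset.card_powerset, nsmul_eq_mul]; push_cast; rfl
          refine (mul_le_mul_of_nonneg_left h2 (modWeight_nonneg Q)).trans (le_of_eq ?_)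
          unfold modWeight
          have : (16 : ℝ) ^ Q.card = 2 ^ Q.card * 8 ^ Q.card := by rw [← mul_pow]; norm_num
          rw [this]
          ring
      _ ≤ _ := by
          rw [← Finset.mul_sum]
          exact mul_le_mul_of_nonneg_left h1 (by norm_num)
  have hr : (((2 : ℝ) ^ (-(1 / 4) : ℝ)) ^ J) ^ 2 ≤ t := by
    have e : ((2 : ℝ) ^ (-(1 / 4) : ℝ)) ^ J = ((2 : ℝ) ^ J) ^ (-(1 / 4) : ℝ) := by
      rw [← Real.rpow_natCast, ← Real.rpow_mul (by norm_num), mul_comm,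
        Real.rpow_mul (by norm_num), Real.rpow_natCast]
    have h2 : ((2 : ℝ) ^ J) ^ (-(1 / 4) : ℝ) ≤ (t ^ (-2 : ℝ)) ^ (-(1 / 4) : ℝ) :=
      Real.rpow_le_rpow_of_nonpos (by positivity) hJ (by norm_num)
    rw [← Real.rpow_mul ht0.le] at h2
    rw [e]
    calc _ ≤ (t ^ ((-2 : ℝ) * -(1 / 4))) ^ 2 := pow_le_pow_left₀ (by positivity) h2 2
      _ = t := by
        rw [← Real.rpow_natCast, ← Real.rpow_mul ht0.le]
        norm_num
  have hf2 : l2 f ^ 2 ≤ ∑ x, f x := by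
    rw [l2_sq]
    refine Finset.sum_le_sum fun x _ => ?_
    nlinarith [hf0 x, hf1 x]
  refine (card_gt_le_l2_div _ (by positivity : 0 < t / 3)).trans ?_
  calc _ ≤ (640 * (C * ((2 : ℝ) ^ (-(1 / 4) : ℝ)) ^ J * l2 f)) ^ 2 / (t / 3) ^ 2 :=
        div_le_div_of_nonneg_right (pow_le_pow_left₀ (l2_nonneg _) hl2 2) (by positivity)
    _ = 9 * (640 * C) ^ 2 / t ^ 2 * ((((2 : ℝ) ^ (-(1 / 4) : ℝ)) ^ J) ^ 2 * l2 f ^ 2) := by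
        field_simp
        ring
    _ ≤ 9 * (640 * C) ^ 2 / t ^ 2 * (t * ∑ x, f x) := by
        refine mul_le_mul_of_nonneg_left ?_ (by positivity)
        exact mul_le_mul hr hf2 (sq_nonneg _) ht0.le
    _ = _ := by field_simp

/-! ### Summing the errors -/

lemma card_adm_le (y Z : ℕ) : (adm y Z).card ≤ Z := by
  have h := Finset.card_le_card_of_injOn (s := adm y Z) (t := Finset.Icc 1 Z)
    (fun Q : Finset ℕ => ∏ p ∈ Q, p)
    (fun Q hQ => by
      obtain ⟨h1, h2⟩ := mem_adm.1 hQ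
      exact Finset.mem_coe.2
        (Finset.mem_Icc.2 ⟨Finset.prod_pos fun p hp => (h1 p hp).1.pos, h2⟩))
    (prod_primes_injOn.mono fun Q hQ p hp => ((mem_adm.1 hQ).1 p hp).1)
  simpa using h

lemma level_pow_div_le (n : ℕ) : ((level n : ℕ) : ℝ) ^ 20 / 2 ^ n ≤ √(1 / 2) ^ n := by
  refine le_of_sq_le_sq ?_ (by positivity)
  have h : ((level n : ℕ) : ℝ) ^ 40 ≤ 2 ^ n := by
    have : level n ^ 40 ≤ 2 ^ n := by
      unfold level
      rw [← pow_mul]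
      exact Nat.pow_le_pow_right (by norm_num) (Nat.div_mul_le_self n 40)
    exact_mod_cast this
  rw [← pow_mul, mul_comm n 2, pow_mul, Real.sq_sqrt (by norm_num), div_pow, ← pow_mul,
    one_div, inv_pow, div_le_iff₀ (by positivity)]
  calc _ ≤ (2 : ℝ) ^ n := h
    _ = (2 ^ n)⁻¹ * (2 ^ n) ^ 2 := by field_simp

lemma sum_errPart_le {G : Type*} [AddCommGroup G] [Fintype G] {y n : ℕ} (hy : 1 ≤ y) (hn : 1 ≤ n)
    (u : G) {f : G → ℝ} (hf : ∀ x, 0 ≤ f x) :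
    ∑ x, errPart y n u f x ≤ 20482 * (y : ℝ) ^ 2 * ((n : ℝ) ^ 2 * √(1 / 2) ^ n) * ∑ x, f x := by
  have hS : 0 ≤ ∑ x, f x := Finset.sum_nonneg fun x _ => hf x
  set S := ∑ x, f x with hSdef
  have hD1 : (1 : ℝ) ≤ (level n : ℕ) := by
    exact_mod_cast (Nat.one_le_two_pow : 1 ≤ 2 ^ (n / 40))
  have hy1 : (1 : ℝ) ≤ y := by exact_mod_cast hy
  have hn1 : (1 : ℝ) ≤ n := by exact_mod_cast hn
  have hρ := level_pow_div_le n
  set D : ℝ := ((level n : ℕ) : ℝ) with hD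
  have hterm : ∀ Q ∈ adm y (level n * level n), modWeight Q *
      ((y : ℝ) * ((∏ p ∈ Q, p : ℕ) : ℝ) ^ 2 / 2 ^ n * (2 * (y * projLen Q : ℕ) * S)) ≤
      20480 * (y : ℝ) ^ 2 * (D ^ 18 / 2 ^ n) * S := by
    intro Q hQ
    obtain ⟨h1, h2⟩ := mem_adm.1 hQ
    have hq0 : 0 < ∏ p ∈ Q, p := Finset.prod_pos fun p hp => (h1 p hp).1.pos
    have hc : 2 ^ Q.card ≤ ∏ p ∈ Q, p :=
      Finset.pow_card_le_prod _ _ _ fun p hp => (h1 p hp).1.two_le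
    have hcR : (2 : ℝ) ^ Q.card ≤ ((∏ p ∈ Q, p : ℕ) : ℝ) := mod_cast hc
    have hq : (0 : ℝ) < ((∏ p ∈ Q, p : ℕ) : ℝ) := Nat.cast_pos.2 hq0
    have hqD : ((∏ p ∈ Q, p : ℕ) : ℝ) ≤ D * D := by
      rw [hD, ← Nat.cast_mul]
      exact Nat.cast_le.2 h2
    unfold modWeight projLen
    rw [Nat.cast_mul, Nat.cast_mul, Nat.cast_pow]
    set q : ℝ := ((∏ p ∈ Q, p : ℕ) : ℝ)
    push_cast
    have h8 : (8 : ℝ) ^ Q.card ≤ q ^ 3 := by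
      calc (8 : ℝ) ^ Q.card = (2 ^ Q.card) ^ 3 := by rw [← pow_mul, mul_comm, pow_mul]; norm_num
        _ ≤ q ^ 3 := pow_le_pow_left₀ (by positivity) hcR 3
    have h9 : (8 : ℝ) ^ Q.card * q ^ 6 ≤ D ^ 18 := by
      calc (8 : ℝ) ^ Q.card * q ^ 6 ≤ q ^ 3 * q ^ 6 := by gcongr
        _ = q ^ 9 := by ring
        _ ≤ (D * D) ^ 9 := pow_le_pow_left₀ hq.le hqD 9
        _ = D ^ 18 := by ring
    calc _ = 20480 * (y : ℝ) ^ 2 * ((8 : ℝ) ^ Q.card * q ^ 6 / 2 ^ n) * S := by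
          field_simp; ring
      _ ≤ _ := by gcongr
  have hlog0 : 0 ≤ Real.log ((2 : ℝ) ^ n) := Real.log_nonneg (one_le_pow₀ one_le_two)
  have hlog : Real.log ((2 : ℝ) ^ n) ≤ n := by
    rw [Real.log_pow]
    have : Real.log 2 ≤ 1 := Real.log_two_lt_d9.le.trans (by norm_num)
    nlinarith
  have hcard : ((adm y (level n * level n)).card : ℝ) ≤ D * D := by
    rw [hD, ← Nat.cast_mul]
    exact Nat.cast_le.2 (card_adm_le y _)
  unfold errPart
  rw [Finset.sum_add_distrib, Finset.sum_comm]
  simp only [← Finset.mul_sum, sum_edgeSum, sum_powerSum]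
  have hA : ∑ Q ∈ adm y (level n * level n), modWeight Q *
      ((y : ℝ) * ((∏ p ∈ Q, p : ℕ) : ℝ) ^ 2 / 2 ^ n * (2 * (y * projLen Q : ℕ) * S)) ≤
      20480 * (y : ℝ) ^ 2 * ((n : ℝ) ^ 2 * √(1 / 2) ^ n) * S := by
    refine (Finset.sum_le_card_nsmul _ _ _ hterm).trans ?_
    rw [nsmul_eq_mul]
    calc _ ≤ D * D * (20480 * (y : ℝ) ^ 2 * (D ^ 18 / 2 ^ n) * S) := by gcongr
      _ = 20480 * (y : ℝ) ^ 2 * (1 * (D ^ 20 / 2 ^ n)) * S := by ring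
      _ ≤ _ := by
        gcongr
        exact one_le_pow₀ hn1
  have hB : (y : ℝ) / 2 ^ n * (Real.log ((2 : ℝ) ^ n) * ((D + 1) * n * S)) ≤
      2 * (y : ℝ) ^ 2 * ((n : ℝ) ^ 2 * √(1 / 2) ^ n) * S := by
    have hD20 : D + 1 ≤ 2 * D ^ 20 := by
      have : D ^ 1 ≤ D ^ 20 := pow_le_pow_right₀ hD1 (by norm_num)
      linarith
    have hyy : (y : ℝ) ≤ y ^ 2 := by nlinarith
    calc _ ≤ (y : ℝ) ^ 2 / 2 ^ n * (n * ((2 * D ^ 20) * n * S)) := by gcongr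
      _ = 2 * (y : ℝ) ^ 2 * ((n : ℝ) ^ 2 * (D ^ 20 / 2 ^ n)) * S := by ring
      _ ≤ _ := by gcongr
  calc _ ≤ _ := add_le_add hA hB
    _ = _ := by ring

lemma exists_sum_errPart_le {y : ℕ} (hy : 1 ≤ y) :
    ∃ n₀ : ℕ, 40 ≤ n₀ ∧ 2 * y ≤ n₀ ∧ ∀ {G : Type} [AddCommGroup G] [Fintype G] (m : ℕ) (u : G)
      (f : G → ℝ), (∀ x, 0 ≤ f x) →
      ∑ x, ∑ n ∈ Finset.Icc n₀ m, errPart y n u f x ≤ ∑ x, f x := by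
  have hs : Summable (fun n : ℕ => 20482 * (y : ℝ) ^ 2 * ((n : ℝ) ^ 2 * √(1 / 2) ^ n)) := by
    refine Summable.mul_left _ (summable_pow_mul_geometric_of_norm_lt_one 2 ?_)
    rw [Real.norm_of_nonneg (Real.sqrt_nonneg _), Real.sqrt_lt' one_pos]
    norm_num
  obtain ⟨s, hs⟩ := summable_iff_vanishing_norm.1 hs 1 one_pos
  refine ⟨max 40 (max (2 * y) (s.sup id + 1)), le_max_left _ _,
    (le_max_left _ _).trans (le_max_right _ _), fun {G} _ _ m u f hf => ?_⟩
  set n₀ := max 40 (max (2 * y) (s.sup id + 1)) with hn₀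
  have hS : 0 ≤ ∑ x, f x := Finset.sum_nonneg fun x _ => hf x
  rw [Finset.sum_comm]
  have hdisj : Disjoint (Finset.Icc n₀ m) s := by
    refine Finset.disjoint_left.2 fun n hn hns => ?_
    have h1 : n ≤ s.sup id := Finset.le_sup (f := id) hns
    have h2 := (Finset.mem_Icc.1 hn).1
    omega
  have h1 := (le_abs_self _).trans (hs _ hdisj).le
  calc _ ≤ ∑ n ∈ Finset.Icc n₀ m,
        20482 * (y : ℝ) ^ 2 * ((n : ℝ) ^ 2 * √(1 / 2) ^ n) * ∑ x, f x :=
        Finset.sum_le_sum fun n hn => sum_errPart_le hy (by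
          have := (Finset.mem_Icc.1 hn).1
          omega) u hf
    _ = (∑ n ∈ Finset.Icc n₀ m, 20482 * (y : ℝ) ^ 2 * ((n : ℝ) ^ 2 * √(1 / 2) ^ n)) *
        ∑ x, f x := by rw [Finset.sum_mul]
    _ ≤ 1 * ∑ x, f x := mul_le_mul_of_nonneg_right h1 hS
    _ = _ := one_mul _

/-! ### The maximal inequality on finite groups -/

lemma exists_card_groupPavg_gt_le {s : ℝ} (hs0 : 0 < s) (hs2 : s ≤ 2) :
    ∃ C : ℝ, 0 < C ∧ ∀ y : ℕ, 1 ≤ y → ∃ n₀ : ℕ, ∀ (b : ℤ) {G : Type} [AddCommGroup G] [Fintype G]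
      (m : ℕ) (u : G) (f : G → ℝ), (∀ x, 0 ≤ f x) → (∀ x, f x ≤ 1) → ∀ t : ℝ, 0 < t → t < 1 →
      ((Finset.univ.filter (fun x => ∃ n, n₀ ≤ n ∧ n ≤ m ∧
        t < groupPavg y b (2 ^ n) u f x)).card : ℝ) ≤ C * t ^ (-1 - s) * ∑ x, f x := by
  obtain ⟨C₁, hC₁, hlow⟩ := exists_card_lowPart_gt_le hs0 hs2
  obtain ⟨C₂, hC₂, hhigh⟩ := exists_card_highPart_gt_le
  refine ⟨C₁ + C₂ + 3, by positivity, fun y hy => ?_⟩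
  obtain ⟨n₀, hn40, hny, herr⟩ := exists_sum_errPart_le hy
  refine ⟨n₀, fun b {G} _ _ m u f hf0 hf1 t ht0 ht1 => ?_⟩
  obtain ⟨a, ha⟩ := exists_groupPavg_le hy b
  have hS : 0 ≤ ∑ x, f x := Finset.sum_nonneg fun x _ => hf0 x
  obtain ⟨J, hJ1, hJ2⟩ := exists_nat_pow_near
    (Real.one_le_rpow_of_pos_of_le_one_of_nonpos ht0 ht1.le (by norm_num : (-2 : ℝ) ≤ 0))
    one_lt_two
  have hJ3 : (2 : ℝ) ^ (J + 1) ≤ 2 * t ^ (-2 : ℝ) := by rw [pow_succ]; linarith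
  have hsub : Finset.univ.filter (fun x => ∃ n, n₀ ≤ n ∧ n ≤ m ∧
        t < groupPavg y b (2 ^ n) u f x) ⊆
      Finset.univ.filter (fun x => t / 3 < lowPart y (2 ^ m) a (2 ^ (J + 1)) u f x) ∪
      Finset.univ.filter (fun x => t / 3 <
        highPart y (2 ^ m) a (2 ^ (J + 1)) (level m * level m) u f x) ∪
      Finset.univ.filter (fun x => t / 3 < ∑ n ∈ Finset.Icc n₀ m, errPart y n u f x) := by
    intro x hx
    obtain ⟨n, hn1, hn2, hn3⟩ := (Finset.mem_filter.1 hx).2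
    have h := ha n m (2 ^ (J + 1)) (hn40.trans hn1) (hny.trans hn1) hn2 u f hf0 x
    have he : errPart y n u f x ≤ ∑ n ∈ Finset.Icc n₀ m, errPart y n u f x :=
      Finset.single_le_sum (f := fun n => errPart y n u f x)
        (fun n _ => errPart_nonneg y n u hf0 x) (Finset.mem_Icc.2 ⟨hn1, hn2⟩)
    simp only [Finset.mem_union, Finset.mem_filter, Finset.mem_univ, true_and]
    by_contra! hcon
    linarith [hcon.1.1, hcon.1.2, hcon.2]
  have ht : t⁻¹ ≤ t ^ (-1 - s) := by
    rw [← Real.rpow_neg_one]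
    exact Real.rpow_le_rpow_of_exponent_ge ht0 ht1.le (by linarith)
  have h1 := hlow y (2 ^ m) (J + 1) a u f hf0 hf1 t ht0 ht1.le hJ3
  have h2 := hhigh y (2 ^ m) (J + 1) (level m * level m) a u f hf0 hf1 t ht0 hJ2.le
  have h3 : ((Finset.univ.filter (fun x => t / 3 <
      ∑ n ∈ Finset.Icc n₀ m, errPart y n u f x)).card : ℝ) ≤ 3 * t⁻¹ * ∑ x, f x := by
    refine (card_gt_le_sum_div (fun x => Finset.sum_nonneg fun n _ =>
      errPart_nonneg y n u hf0 x) (by positivity)).trans ?_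
    rw [div_le_iff₀ (by positivity)]
    refine (herr m u f hf0).trans (le_of_eq ?_)
    field_simp
  have hcard := Nat.cast_le (α := ℝ).2 ((Finset.card_le_card hsub).trans
    ((Finset.card_union_le _ _).trans (Nat.add_le_add_right (Finset.card_union_le _ _) _)))
  rw [Nat.cast_add, Nat.cast_add] at hcard
  calc _ ≤ _ := hcard
    _ ≤ C₁ * t ^ (-1 - s) * ∑ x, f x + C₂ * t⁻¹ * ∑ x, f x + 3 * t⁻¹ * ∑ x, f x :=
        add_le_add (add_le_add h1 h2) h3
    _ ≤ C₁ * t ^ (-1 - s) * ∑ x, f x + C₂ * t ^ (-1 - s) * ∑ x, f x +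
        3 * t ^ (-1 - s) * ∑ x, f x := by gcongr
    _ = _ := by ring

/-! ### Transference to the integers -/

lemma exists_injOn_intCast_zmod (X : Finset ℤ) :
    ∃ M : ℕ, 0 < M ∧ Set.InjOn (fun x : ℤ => (x : ZMod M)) X := by
  refine ⟨2 * X.sup Int.natAbs + 1, by omega, fun x hx z hz h => ?_⟩
  have h1 : x.natAbs ≤ X.sup Int.natAbs := Finset.le_sup hx
  have h2 : z.natAbs ≤ X.sup Int.natAbs := Finset.le_sup hz
  have h3 := ((ZMod.intCast_eq_intCast_iff _ _ _).1 h).dvd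
  have h4 := Int.eq_zero_of_abs_lt_dvd h3 (by
    rw [abs_lt]
    push_cast
    omega)
  omega

lemma pavg_indicator_le_groupPavg (N y : ℕ) (b : ℤ) (F : Finset ℤ) (M : ℕ) (x : ℤ) :
    pavg N y b (fun z => if z ∈ F then (1 : ℝ) else 0) x ≤
      groupPavg y b N (1 : ZMod M)
        (fun z => if z ∈ F.image (fun w : ℤ => (w : ZMod M)) then (1 : ℝ) else 0) x := by
  unfold pavg groupPavg
  refine mul_le_mul_of_nonneg_left (Finset.sum_le_sum fun n _ => mul_le_mul_of_nonneg_left ?_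
    ArithmeticFunction.vonMangoldt_nonneg) (by positivity)
  beta_reduce
  by_cases h : x - n ∈ F
  · have : (x : ZMod M) - n • (1 : ZMod M) ∈ F.image (fun w : ℤ => (w : ZMod M)) :=
      Finset.mem_image.2 ⟨x - n, h, by simp⟩
    rw [if_pos h, if_pos this]
  · rw [if_neg h]
    split_ifs <;> norm_num

lemma exists_card_pavg_gt_le {s : ℝ} (hs0 : 0 < s) (hs2 : s ≤ 2) :
    ∃ C : ℝ, 0 < C ∧ ∀ y : ℕ, 1 ≤ y → ∃ n₀ : ℕ, ∀ (b : ℤ) (F X : Finset ℤ) (t : ℝ),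
      0 < t → t < 1 →
      (∀ x ∈ X, ∃ n, n₀ ≤ n ∧ t < pavg (2 ^ n) y b (fun z => if z ∈ F then (1 : ℝ) else 0) x) →
      (X.card : ℝ) ≤ C * t ^ (-1 - s) * F.card := by
  obtain ⟨C, hC, h⟩ := exists_card_groupPavg_gt_le hs0 hs2
  refine ⟨C, hC, fun y hy => ?_⟩
  obtain ⟨n₀, hn₀⟩ := h y hy
  refine ⟨n₀, fun b F X t ht0 ht1 hX => ?_⟩
  choose! k hk1 hk2 using hX
  obtain ⟨M, hM, hinj⟩ := exists_injOn_intCast_zmod X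
  have : NeZero M := ⟨hM.ne'⟩
  have hg := hn₀ b (X.sup k) (1 : ZMod M)
    (fun z => if z ∈ F.image (fun w : ℤ => (w : ZMod M)) then (1 : ℝ) else 0)
    (fun x => by split_ifs <;> norm_num) (fun x => by split_ifs <;> norm_num) t ht0 ht1
  refine (Nat.cast_le.2 (Finset.card_le_card_of_injOn (fun x : ℤ => (x : ZMod M))
    (fun x hx => ?_) hinj)).trans (hg.trans ?_)
  · exact Finset.mem_coe.2 (Finset.mem_filter.2 ⟨Finset.mem_univ _, k x, hk1 x hx,
      Finset.le_sup hx, (hk2 x hx).trans_le (pavg_indicator_le_groupPavg _ _ _ _ _ _)⟩)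
  · refine mul_le_mul_of_nonneg_left ?_ (by positivity)
    rw [Finset.sum_boole, Finset.filter_univ_mem]
    exact_mod_cast Finset.card_image_le

theorem weak_type_maximal_estimate :
    ∀ r : ℝ, 1 < r → r < 2 →
      ∃ C : ℝ, 0 < C ∧
        ∀ y : ℕ, 1 ≤ y →
          ∃ Nry : ℕ,
            ∀ b : ℤ, Int.gcd b y = 1 →
              ∀ F : Finset ℤ, ∀ lam : ℝ, 0 < lam → lam < 1 →
                (∑' x : ℤ,
                    (if ∃ n : ℕ,
                        max ((Nry : ℝ)) ((2 : ℝ) ^ (lam ^ (1 - r))) < (2 : ℝ) ^ n ∧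
                        lam < pavg (2 ^ n) y b (fun z => if z ∈ F then (1:ℝ) else 0) x
                      then (1 : ℝ≥0∞) else 0)) ≤
                  ENNReal.ofReal (C * lam ^ (-r - (r - 1) / 4) * (F.card : ℝ)) := by
  intro r hr1 hr2
  obtain ⟨C, hC, h⟩ := exists_card_pavg_gt_le (s := r - 1) (by linarith) (by linarith)
  refine ⟨C, hC, fun y hy => ?_⟩
  obtain ⟨n₀, hn₀⟩ := h y hy
  refine ⟨2 ^ n₀, fun b _ F lam h0 h1 => ?_⟩
  rw [ENNReal.tsum_eq_iSup_sum]
  refine iSup_le fun X => ?_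
  rw [Finset.sum_boole, ← ENNReal.ofReal_natCast]
  refine ENNReal.ofReal_le_ofReal ((hn₀ b F _ lam h0 h1 fun x hx => ?_).trans ?_)
  · obtain ⟨n, hn, hlam⟩ := (Finset.mem_filter.1 hx).2
    refine ⟨n, ?_, hlam⟩
    have h2 := (le_max_left _ _).trans_lt hn
    push_cast at h2
    exact ((pow_lt_pow_iff_right₀ one_lt_two).1 h2).le
  · have := Real.rpow_le_rpow_of_exponent_ge h0 h1.le
      (by linarith : -r - (r - 1) / 4 ≤ -1 - (r - 1))
    gcongr

end
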